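/- arXiv:2009.04827 — 4 statements merged into one kernel-verified Lean document; each statement's English description precedes it below -/
import Mathlib

section
/- For all sufficiently large n, the string 0 · 1 · 0^{n−2} · 1 does not occur as a substring of the finite string S_1 S_2 ··· S_{n−1}. -/
/-- `occ w x`: the number of indices `i` with `x[i..i+|w|-1] = w`,
i.e. the number of occurrences of `w` as a substring of `x`. -/
def occ (w x : List Bool) : ℕ :=
  ((List.range (x.length + 1 - w.length)).filter
    (fun i => decide ((x.drop i).take w.length = w))).length

/-- `occB w x`: the number of occurrences of `w` as a substring of `x`
starting at a position divisible by `|w|` (aligned block occurrences). -/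
def occB (w x : List Bool) : ℕ :=
  ((List.range (x.length + 1 - w.length)).filter
    (fun i => decide (i % w.length = 0) && decide ((x.drop i).take w.length = w))).length

/-- `x` is a de Bruijn string of order `n`: it has length `2^n` and every binary
string of length `n` occurs exactly once as a substring of `x ++ x[0..n-2]`. -/
def IsDeBruijn (n : ℕ) (x : List Bool) : Prop :=
  x.length = 2 ^ n ∧ ∀ w : List Bool, w.length = n → occ w (x ++ x.take (n - 1)) = 1

open Classical in
/-- `db n` is the lexicographically least de Bruijn string of order `n`
(using the lexicographic order on `List Bool`, with `false < true`);
`[]` if none exists. -/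
noncomputable def db (n : ℕ) : List Bool :=
  if h : ∃ x : List Bool, IsDeBruijn n x ∧ ∀ y, IsDeBruijn n y → x ≤ y then h.choose else []

/-- The block `B_{n,i} = db_i(n)^t`: `t` copies of the cyclic left shift of `db n` by `i`. -/
noncomputable def Bblk (n t i : ℕ) : List Bool := (List.replicate t ((db n).rotate i)).flatten

/-- The odd part `t` of `n = 2^s * t`. -/
def oddPart (n : ℕ) : ℕ := n / 2 ^ (n.factorization 2)

/-- `Sblk n` is the string `S_n = B_{n,0} B_{n,1} ⋯ B_{n,2^s-1}` where `n = 2^s * t`, `t` odd. -/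
noncomputable def Sblk (n : ℕ) : List Bool :=
  ((List.range (2 ^ (n.factorization 2))).map (fun i => Bblk n (oddPart n) i)).flatten

/-- `Sfin m = S_1 S_2 ⋯ S_m`. -/
noncomputable def Sfin (m : ℕ) : List Bool := ((List.range m).map (fun k => Sblk (k + 1))).flatten

/-- The infinite sequence `S = S_1 S_2 S_3 ⋯`, as a function giving its `i`-th bit. -/
noncomputable def Sseq (i : ℕ) : Bool := (Sfin (i + 1)).getD i false

/-- For odd `n`, `S_n = db(n)^n`. -/
noncomputable def Sodd (n : ℕ) : List Bool := (List.replicate n (db n)).flatten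

/-!
De Bruijn strings of order `m` are read along the Eulerian circuits of a graph whose edges are the
words of length `m`. A circuit is encoded as a permutation of the words, and exchanging the two
edges that leave a vertex multiplies the permutation by a transposition, which splits one cycle or
joins two.

The string `db m` starts with `0^m 1`. For `m ≥ 2` it ends with `11`: if it ended with `01`, two
exchanges would turn its circuit into another one whose string first differs from `db m` in a `0`
replacing a `1`. Hence every rotation of `db m` by at most `m` places is `0^a L 0^b`, where `L`
starts with `1`, ends with `11`, and does not contain `1 0^(m-1)`. In a concatenation of such
strings for various `m < n`, a factor `01 0^(n-2) 1` would have both of its `1`s in the same `L`,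
because the first of them follows a `0` and so does not end an `L`. As `m - 1 ≤ n - 2`, that `L`
would contain `1 0^(m-1)`. Only `S_1 = 01` is not of this form, and it lies too close to the start
to matter.
-/

open Equiv Function

section SwapMul

variable {α : Type*} {f : Perm α} {x y z : α}

theorem swap_mul_pow_apply_of_forall_ne [DecidableEq α] {k : ℕ}
    (h : ∀ m < k, (f ^ (m + 1)) z ≠ x ∧ (f ^ (m + 1)) z ≠ y) :
    ((swap x y * f) ^ k) z = (f ^ k) z := by
  induction k with
  | zero => rfl
  | succ k ih =>
    rw [pow_succ', Perm.mul_apply, ih fun m hm => h m (hm.trans k.lt_succ_self), Perm.mul_apply,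
      ← Perm.mul_apply f, ← pow_succ', swap_apply_of_ne_of_ne (h k k.lt_succ_self).1
        (h k k.lt_succ_self).2]

variable [Finite α]

theorem mem_of_mapsTo_of_sameCycle {s : Set α} (hs : Set.MapsTo f s s) (hx : x ∈ s)
    (hxz : f.SameCycle x z) : z ∈ s := by
  obtain ⟨k, rfl⟩ := hxz.exists_nat_pow_eq
  exact hs.perm_pow k hx

variable [DecidableEq α]

theorem sameCycle_or_sameCycle_swap_mul (hxz : f.SameCycle x z) :
    (swap x y * f).SameCycle x z ∨ (swap x y * f).SameCycle y z := by
  refine mem_of_mapsTo_of_sameCycle (s := {v | _ ∨ _}) (fun v hv => ?_) (.inl (.refl _ x)) hxz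
  rcases eq_or_ne (f v) x with hx | hx
  · exact hx ▸ .inl (.refl _ _)
  rcases eq_or_ne (f v) y with hy | hy
  · exact hy ▸ .inr (.refl _ _)
  have hfv : (swap x y * f) v = f v := swap_apply_of_ne_of_ne hx hy
  exact hfv ▸ hv.imp Perm.sameCycle_apply_right.2 Perm.sameCycle_apply_right.2

theorem sameCycle_swap_mul_of_not_sameCycle (hxy : ¬ f.SameCycle x y) :
    (swap x y * f).SameCycle x y := by
  by_contra hg
  have hmaps : Set.MapsTo f {v | f.SameCycle x v ∧ (swap x y * f).SameCycle x v}
      {v | f.SameCycle x v ∧ (swap x y * f).SameCycle x v} := by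
    rintro v ⟨hfv, hgv⟩
    have hfv' := Perm.sameCycle_apply_right.2 hfv
    have hgv' := Perm.sameCycle_apply_right.2 hgv
    have hx : f v ≠ x := fun h => hg (by simpa [h] using hgv')
    have hy : f v ≠ y := fun h => hxy (h ▸ hfv')
    exact ⟨hfv', by simpa [swap_apply_of_ne_of_ne hx hy] using hgv'⟩
  have hpre := (mem_of_mapsTo_of_sameCycle hmaps ⟨.refl _ x, .refl _ x⟩
    (Perm.sameCycle_symm_apply_right.2 (.refl f x))).2
  exact hg (by simpa using Perm.sameCycle_apply_right.2 hpre)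

theorem sameCycle_swap_mul_of_sameCycle_or (hxy : ¬ f.SameCycle x y)
    (hz : f.SameCycle x z ∨ f.SameCycle y z) : (swap x y * f).SameCycle x z := by
  have hjoin := sameCycle_swap_mul_of_not_sameCycle hxy
  rcases hz with hz | hz
  · exact (sameCycle_or_sameCycle_swap_mul hz).elim id hjoin.trans
  · have := sameCycle_or_sameCycle_swap_mul (y := x) hz
    rw [swap_comm] at this
    exact this.elim hjoin.trans id

theorem sameCycle_swap_mul_swap_mul {v w : α} (hf : ∀ z, f.SameCycle x z)
    (hvw : ¬ (swap x y * f).SameCycle v w) (z : α) :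
    (swap v w * (swap x y * f)).SameCycle v z := by
  have hxy : ∀ u, (swap x y * f).SameCycle x u ∨ (swap x y * f).SameCycle y u := fun u =>
    sameCycle_or_sameCycle_swap_mul (hf u)
  refine sameCycle_swap_mul_of_sameCycle_or hvw ?_
  rcases hxy v with hv | hv <;> rcases hxy w with hw | hw
  · exact absurd (hv.symm.trans hw) hvw
  · exact (hxy z).imp hv.symm.trans hw.symm.trans
  · exact (hxy z).symm.imp hv.symm.trans hw.symm.trans
  · exact absurd (hv.symm.trans hw) hvw

end SwapMul

section Words

variable {n : ℕ} {v w : Fin (n + 1) → Bool} {s : ℕ → Bool}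

/-- The word of length `n + 1` read in the sequence `s` from position `k` on. -/
def window (n : ℕ) (s : ℕ → Bool) (k : ℕ) : Fin (n + 1) → Bool := fun j => s (k + j)

theorem init_window_succ (s : ℕ → Bool) (k : ℕ) :
    Fin.init (window n s (k + 1)) = Fin.tail (window n s k) := by
  funext j
  simp only [window, Fin.init, Fin.tail, Fin.val_castSucc, Fin.val_succ]
  congr 1
  omega

/-- The other word with the same first `n` letters: in the de Bruijn graph, whose edges are the
words of length `n + 1`, the other edge leaving the same vertex. -/
def flipLast (w : Fin (n + 1) → Bool) : Fin (n + 1) → Bool :=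
  update w (Fin.last n) (!w (Fin.last n))

theorem init_flipLast (w : Fin (n + 1) → Bool) : Fin.init (flipLast w) = Fin.init w :=
  Fin.init_update_last ..

theorem flipLast_last (w : Fin (n + 1) → Bool) : flipLast w (Fin.last n) = !w (Fin.last n) :=
  update_self ..

theorem eq_of_init_eq_of_last_eq (hinit : Fin.init v = Fin.init w)
    (hlast : v (Fin.last n) = w (Fin.last n)) : v = w := by
  rw [← Fin.snoc_init_self v, ← Fin.snoc_init_self w, hinit, hlast]

theorem eq_or_eq_flipLast_of_init_eq (h : Fin.init v = Fin.init w) : v = w ∨ v = flipLast w := by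
  rcases eq_or_ne (v (Fin.last n)) (w (Fin.last n)) with hlast | hlast
  · exact .inl (eq_of_init_eq_of_last_eq h hlast)
  · refine .inr (eq_of_init_eq_of_last_eq (h.trans (init_flipLast w).symm) ?_)
    rw [flipLast_last, Bool.eq_not]
    exact hlast

theorem flipLast_ne (w : Fin (n + 1) → Bool) : flipLast w ≠ w := fun h => by
  simpa [flipLast_last] using congrFun h (Fin.last n)

theorem mem_of_forall_init_eq_tail {S : Set (Fin (n + 1) → Bool)}
    (hS : ∀ v ∈ S, ∀ w, Fin.init w = Fin.tail v → w ∈ S) (hv : v ∈ S) (w : Fin (n + 1) → Bool) :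
    w ∈ S := by
  let s : ℕ → Bool := fun i =>
    if h : i < n + 1 then v ⟨i, h⟩ else w (Fin.ofNat (n + 1) (i - (n + 1)))
  have hstart : window n s 0 = v := by
    funext j
    rw [window, Nat.zero_add]
    exact dif_pos j.isLt
  have hend : window n s (n + 1) = w := by
    funext j
    have hj : ¬ n + 1 + (j : ℕ) < n + 1 := by omega
    simp only [window, s, dif_neg hj, Nat.add_sub_cancel_left, Fin.ofNat_eq_cast,
      Fin.cast_val_eq_self]
  have hmem : ∀ k, window n s k ∈ S := fun k => by
    induction k with
    | zero => exact hstart ▸ hv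
    | succ k ih => exact hS _ ih _ (init_window_succ s k)
  exact hend ▸ hmem (n + 1)

end Words

section Circuits

variable {n : ℕ} {f : Perm (Fin (n + 1) → Bool)} {v w : Fin (n + 1) → Bool}

/-- `f` maps every word to a word that may follow it when a window slides along a sequence, i.e.
every edge of the de Bruijn graph to an edge leaving its endpoint. -/
def IsShift (f : Perm (Fin (n + 1) → Bool)) : Prop :=
  ∀ w, Fin.init (f w) = Fin.tail w

/-- An Eulerian circuit of the de Bruijn graph, encoded as the permutation sending each edge to the
next one. -/
structure IsEulerian (f : Perm (Fin (n + 1) → Bool)) : Prop where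
  isShift : IsShift f
  sameCycle : ∀ v w, f.SameCycle v w

theorem IsShift.swap_flipLast_mul (hf : IsShift f) (v : Fin (n + 1) → Bool) :
    IsShift (swap v (flipLast v) * f) := by
  intro w
  rw [← hf w, Perm.mul_apply, swap_apply_def]
  split_ifs with h h
  · rw [h, init_flipLast]
  · rw [h, init_flipLast]
  · rfl

theorem exists_isShift (n : ℕ) : ∃ f : Perm (Fin (n + 1) → Bool), IsShift f := by
  refine ⟨(finRotate (n + 1)).symm.arrowCongr (Equiv.refl Bool), fun w => ?_⟩
  funext j
  simp [Fin.init, Fin.tail, arrowCongr]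

theorem exists_isEulerian (n : ℕ) : ∃ f : Perm (Fin (n + 1) → Bool), IsEulerian f := by
  classical
  obtain ⟨f, hf, hmax⟩ := Set.exists_max_image {f : Perm (Fin (n + 1) → Bool) | IsShift f}
    (fun f => {v | f.SameCycle ⊥ v}.ncard) (Set.toFinite _) (exists_isShift n)
  have hflip : ∀ v, f.SameCycle ⊥ v → f.SameCycle ⊥ (flipLast v) := by
    intro v hv
    by_contra hv'
    have hsplit : ¬ f.SameCycle v (flipLast v) := fun h => hv' (hv.trans h)
    have hv₀ := sameCycle_swap_mul_of_sameCycle_or hsplit (.inl hv.symm)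
    refine (hmax _ (hf.swap_flipLast_mul v)).not_gt
      (Set.ncard_lt_ncard ⟨fun z hz => ?_, fun h => hv' ?_⟩)
    · exact hv₀.symm.trans (sameCycle_swap_mul_of_sameCycle_or hsplit (.inl (hv.symm.trans hz)))
    · exact h (hv₀.symm.trans (sameCycle_swap_mul_of_not_sameCycle hsplit))
  have hall : ∀ w, f.SameCycle ⊥ w := mem_of_forall_init_eq_tail (S := {v | f.SameCycle ⊥ v})
    (fun v hv w hw => by
      rcases eq_or_eq_flipLast_of_init_eq (hw.trans (hf v).symm) with rfl | rfl
      · exact Perm.sameCycle_apply_right.2 hv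
      · exact hflip _ (Perm.sameCycle_apply_right.2 hv)) (Perm.SameCycle.refl f ⊥)
  exact ⟨f, hf, fun v w => (hall v).symm.trans (hall w)⟩

theorem IsShift.pow_add_apply_zero (hf : IsShift f) (w : Fin (n + 1) → Bool) (k : ℕ)
    (j : Fin (n + 1)) : (f ^ (k + j)) w 0 = (f ^ k) w j := by
  induction j using Fin.induction generalizing k with
  | zero => rfl
  | succ j ih =>
    calc (f ^ (k + j.succ)) w 0 = (f ^ (k + 1 + j.castSucc)) w 0 := by
          rw [Fin.val_succ, Fin.val_castSucc, Nat.add_right_comm, Nat.add_assoc]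
      _ = (f ^ (k + 1)) w j.castSucc := ih (k + 1)
      _ = (f ^ k) w j.succ := by rw [pow_succ']; exact congrFun (hf ((f ^ k) w)) j

theorem IsShift.pow_add_apply_zero_eq_last (hf : IsShift f) (w : Fin (n + 1) → Bool) (k : ℕ) :
    (f ^ (k + n)) w 0 = (f ^ k) w (Fin.last n) :=
  hf.pow_add_apply_zero w k (Fin.last n)

theorem IsShift.pow_bot_apply_zero (hf : IsShift f) {k : ℕ} (hk : k ≤ n) :
    (f ^ k) ⊥ 0 = false := by
  simpa using hf.pow_add_apply_zero ⊥ 0 ⟨k, Nat.lt_succ_of_le hk⟩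

theorem IsEulerian.isCycleOn (hf : IsEulerian f) :
    f.IsCycleOn ((Finset.univ : Finset (Fin (n + 1) → Bool)) : Set (Fin (n + 1) → Bool)) := by
  rw [Finset.coe_univ]
  exact ⟨Set.bijOn_univ.2 f.bijective, fun v _ w _ => hf.sameCycle v w⟩

theorem card_words (n : ℕ) : (Finset.univ : Finset (Fin (n + 1) → Bool)).card = 2 ^ (n + 1) := by
  simp

theorem IsEulerian.pow_two_pow_apply (hf : IsEulerian f) (w : Fin (n + 1) → Bool) :
    (f ^ 2 ^ (n + 1)) w = w := by
  simpa only [card_words] using hf.isCycleOn.pow_card_apply (Finset.mem_univ w)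

theorem IsEulerian.pow_mod_apply (hf : IsEulerian f) (w : Fin (n + 1) → Bool) (k : ℕ) :
    (f ^ (k % 2 ^ (n + 1))) w = (f ^ k) w :=
  (hf.isCycleOn.pow_apply_eq_pow_apply (Finset.mem_univ w)).2 (by
    rw [card_words]
    exact Nat.mod_modEq k _)

theorem IsEulerian.injOn_pow_apply (hf : IsEulerian f) (w : Fin (n + 1) → Bool) :
    Set.InjOn (fun k => (f ^ k) w) (Set.Iio (2 ^ (n + 1))) := by
  intro k hk l hl h
  have hmod := (hf.isCycleOn.pow_apply_eq_pow_apply (Finset.mem_univ w)).1 h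
  rw [card_words] at hmod
  exact hmod.eq_of_lt_of_lt hk hl

theorem IsEulerian.exists_pow_apply_eq (hf : IsEulerian f) (v w : Fin (n + 1) → Bool) :
    ∃ k < 2 ^ (n + 1), (f ^ k) v = w := by
  simpa only [card_words] using
    hf.isCycleOn.exists_pow_eq (Finset.mem_univ v) (Finset.mem_univ w)

theorem IsEulerian.pow_apply_ne (hf : IsEulerian f) (hvw : f v = w) {k : ℕ}
    (hk : k + 1 < 2 ^ (n + 1)) : (f ^ k) w ≠ v := by
  intro h
  have hreturn : (f ^ (k + 1)) w = (f ^ 0) w := by rw [pow_succ', Perm.mul_apply, h, hvw]; rfl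
  exact absurd (hf.injOn_pow_apply w hk (Set.mem_Iio.2 (by positivity)) hreturn) k.succ_ne_zero

section Shortcut

variable {x y z : Fin (n + 1) → Bool} {i : ℕ}

theorem IsEulerian.swap_mul_pow_apply (hf : IsEulerian f) (hxz : f x = z)
    (hi : i < 2 ^ (n + 1)) (hy : (f ^ i) z = y) {k : ℕ} (hk : k < i) :
    ((swap x y * f) ^ k) z = (f ^ k) z :=
  swap_mul_pow_apply_of_forall_ne fun m hm =>
    ⟨hf.pow_apply_ne hxz (by omega), fun h => by
      have := hf.injOn_pow_apply z (Set.mem_Iio.2 (by omega)) hi (h.trans hy.symm)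
      omega⟩

theorem IsEulerian.eq_or_exists_of_sameCycle_swap_mul (hf : IsEulerian f) (hxz : f x = z)
    (hi : i < 2 ^ (n + 1)) (hi₀ : 0 < i) (hy : (f ^ i) z = y)
    (hv : (swap x y * f).SameCycle z v) : v = x ∨ ∃ k < i, (f ^ k) z = v := by
  refine mem_of_mapsTo_of_sameCycle (s := {v | v = x ∨ ∃ k < i, (f ^ k) z = v}) ?_
    (.inr ⟨0, hi₀, rfl⟩) hv
  rintro u (rfl | ⟨k, hk, rfl⟩)
  · have hzx : z ≠ u := hf.pow_apply_ne (k := 0) hxz (by omega)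
    have hzy : z ≠ y := fun h => hi₀.ne'
      (hf.injOn_pow_apply z hi (Set.mem_Iio.2 (by positivity)) (hy.trans h.symm))
    exact .inr ⟨0, hi₀, by simp [hxz, swap_apply_of_ne_of_ne hzx hzy]⟩
  rw [Perm.mul_apply, ← Perm.mul_apply f, ← pow_succ']
  rcases Nat.lt_or_eq_of_le (Nat.succ_le_of_lt hk) with hk' | hk'
  · have hx : (f ^ (k + 1)) z ≠ x := hf.pow_apply_ne hxz (by omega)
    have hy' : (f ^ (k + 1)) z ≠ y := fun h =>
      hk'.ne (hf.injOn_pow_apply z (hk'.trans hi) hi (h.trans hy.symm))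
    exact .inr ⟨k + 1, hk', (swap_apply_of_ne_of_ne hx hy').symm⟩
  · exact .inl (by rw [show k + 1 = i from hk', hy, swap_apply_right])

theorem IsEulerian.not_sameCycle_swap_mul (hf : IsEulerian f) (hxz : f x = z)
    (hi : i < 2 ^ (n + 1)) (hi₀ : 0 < i) (hy : (f ^ i) z = y) (hyx : y ≠ x) (hv : f v = x)
    (hvx : v ≠ x) : ¬ (swap x y * f).SameCycle z v := by
  intro h
  obtain ⟨k, hk, rfl⟩ := (hf.eq_or_exists_of_sameCycle_swap_mul hxz hi hi₀ hy h).resolve_left hvx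
  rw [← Perm.mul_apply, ← pow_succ'] at hv
  rcases Nat.lt_or_ge (k + 1 + 1) (2 ^ (n + 1)) with hk' | hk'
  · exact hf.pow_apply_ne hxz hk' hv
  · exact hyx (by rw [← hy, ← hv, show i = k + 1 by omega])

theorem IsEulerian.swap_mul_swap_mul_pow_apply (hf : IsEulerian f) (hxz : f x = z)
    (hi : i < 2 ^ (n + 1)) (hy : (f ^ i) z = y) {a k : ℕ} (ha : a < i) (hk : k < a)
    (hw : ¬ (swap x y * f).SameCycle z w) :
    ((swap ((f ^ a) z) w * (swap x y * f)) ^ k) z = (f ^ k) z := by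
  rw [swap_mul_pow_apply_of_forall_ne fun m hm => ⟨?_, fun h => hw ⟨m + 1, by exact_mod_cast h⟩⟩,
    hf.swap_mul_pow_apply hxz hi hy (hk.trans ha)]
  rw [hf.swap_mul_pow_apply hxz hi hy (by omega)]
  intro h
  have := hf.injOn_pow_apply z (Set.mem_Iio.2 (by omega)) (Set.mem_Iio.2 (by omega)) h
  omega

theorem IsEulerian.swap_mul_swap_mul_pow_apply_self (hf : IsEulerian f) (hxz : f x = z)
    (hi : i < 2 ^ (n + 1)) (hy : (f ^ i) z = y) {a : ℕ} (ha : a < i) (ha₀ : 0 < a)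
    (hw : ¬ (swap x y * f).SameCycle z w) :
    ((swap ((f ^ a) z) w * (swap x y * f)) ^ a) z = w := by
  obtain ⟨k, rfl⟩ := Nat.exists_eq_add_of_le' ha₀
  have hlast : (swap x y * f) ((f ^ k) z) = (f ^ (k + 1)) z := by
    rw [← hf.swap_mul_pow_apply hxz hi hy (k.lt_succ_self.trans ha),
      ← hf.swap_mul_pow_apply hxz hi hy ha, pow_succ' _ k, Perm.mul_apply (_ * f)]
  rw [pow_succ' (_ * (_ * f)), Perm.mul_apply,
    hf.swap_mul_swap_mul_pow_apply hxz hi hy ha k.lt_succ_self hw, Perm.mul_apply, hlast,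
    swap_apply_left]

end Shortcut

theorem IsEulerian.isEulerian_swap_flipLast_mul {x : Fin (n + 1) → Bool} (hf : IsEulerian f)
    (hv : ¬ (swap x (flipLast x) * f).SameCycle v (flipLast v)) :
    IsEulerian (swap v (flipLast v) * (swap x (flipLast x) * f)) where
  isShift := (hf.isShift.swap_flipLast_mul x).swap_flipLast_mul v
  sameCycle z w :=
    (sameCycle_swap_mul_swap_mul (hf.sameCycle x) hv z).symm.trans
      (sameCycle_swap_mul_swap_mul (hf.sameCycle x) hv w)

/-- The word `0^{n-k} 1 0^k`, for `k ≤ n`; the zero word for `k > n`. -/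
def singleOne (n k : ℕ) : Fin (n + 1) → Bool := window n (fun i => decide (i = n)) k

theorem singleOne_apply (n k : ℕ) (j : Fin (n + 1)) : singleOne n k j = decide (k + j = n) := rfl

theorem singleOne_zero_last (n : ℕ) : singleOne n 0 (Fin.last n) = true := by
  simp [singleOne_apply]

theorem singleOne_apply_zero_of_lt {k : ℕ} (hk : k < n) : singleOne n k 0 = false := by
  simp [singleOne_apply, hk.ne]

theorem singleOne_self_apply_zero (n : ℕ) : singleOne n n 0 = true := by simp [singleOne_apply]

theorem init_singleOne_succ (n k : ℕ) :
    Fin.init (singleOne n (k + 1)) = Fin.tail (singleOne n k) :=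
  init_window_succ _ k

theorem singleOne_succ_last (n k : ℕ) : singleOne n (k + 1) (Fin.last n) = false := by
  simp [singleOne_apply]

theorem eq_singleOne_zero_of_init (h : Fin.init v = Fin.tail (⊥ : Fin (n + 1) → Bool))
    (hv : v ≠ ⊥) : v = singleOne n 0 := by
  have hinit : Fin.init v = Fin.init (⊥ : Fin (n + 1) → Bool) := h
  have hone : Fin.init (singleOne n 0) = Fin.init (⊥ : Fin (n + 1) → Bool) := by
    funext j
    simp [Fin.init, singleOne_apply, j.isLt.ne]
  refine eq_of_init_eq_of_last_eq (hinit.trans hone.symm) ?_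
  rw [singleOne_zero_last]
  by_contra hlast
  exact hv (eq_of_init_eq_of_last_eq hinit (by simpa using hlast))

theorem IsEulerian.apply_bot (hf : IsEulerian f) : f ⊥ = singleOne n 0 :=
  eq_singleOne_zero_of_init (hf.isShift ⊥)
    (hf.pow_apply_ne (k := 0) rfl (Nat.one_lt_two_pow n.succ_ne_zero))

theorem IsShift.exists_not_sameCycle_flipLast (hf : IsShift f) (h₀ : f ⊥ = singleOne n 0) {m : ℕ}
    (hm : ¬ f.SameCycle ⊥ (singleOne n m)) :
    ∃ v, f.SameCycle ⊥ v ∧ v (Fin.last n) = true ∧ ¬ f.SameCycle ⊥ (flipLast v) := by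
  by_contra! hflip
  refine hm ?_
  clear hm
  induction m with
  | zero => exact h₀ ▸ Perm.sameCycle_apply_right.2 (.refl f ⊥)
  | succ m ih =>
    have hnext : f.SameCycle ⊥ (f (singleOne n m)) := Perm.sameCycle_apply_right.2 ih
    rcases eq_or_eq_flipLast_of_init_eq
      ((init_singleOne_succ n m).trans (hf (singleOne n m)).symm) with h | h
    · exact h ▸ hnext
    · refine h ▸ hflip _ hnext ?_
      have hlast := singleOne_succ_last n m
      rwa [h, flipLast_last, Bool.not_eq_false'] at hlast

theorem IsEulerian.eq_singleOne_of_apply_eq_bot (hf : IsEulerian f) (h : f v = ⊥) :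
    v = singleOne n n := by
  have htail : ∀ j : Fin n, v j.succ = false := fun j =>
    (congrFun (hf.isShift v) j).symm.trans (by rw [h]; rfl)
  funext j
  refine Fin.cases ?_ (fun j => ?_) j
  · rw [singleOne_self_apply_zero]
    by_contra h₀
    have hv : v = ⊥ := funext (Fin.cases (by simpa using h₀) htail)
    exact hf.pow_apply_ne (k := 0) h (Nat.one_lt_two_pow n.succ_ne_zero) hv.symm
  · simp [htail, singleOne_apply]

-- Shortcut the circuit just before its last edge `1 0^n` by sending the predecessor of that edge to
-- the other edge with the same source. The shortened cycle misses `0 1 0^(n-1)`, hence can be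
-- joined to the rest by turning to `0` at some edge where `f` turned to `1`.
theorem IsEulerian.exists_exchange (hf : IsEulerian f) {m : ℕ} (hm : m < n)
    (h : f (f (singleOne n m)) = ⊥) :
    ∃ g, IsEulerian g ∧ ∃ a < 2 ^ (n + 1), (∀ k < a, (g ^ k) ⊥ = (f ^ k) ⊥) ∧
      (f ^ a) ⊥ (Fin.last n) = true ∧ (g ^ a) ⊥ (Fin.last n) = false := by
  obtain ⟨x, hx⟩ : ∃ x, f (singleOne n m) = x := ⟨_, rfl⟩
  have hxn : x = singleOne n n := hf.eq_singleOne_of_apply_eq_bot (hx ▸ h)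
  have hx_zero : x 0 = true := hxn ▸ singleOne_self_apply_zero n
  have hx_last : x (Fin.last n) = false := by simp [hxn, singleOne_apply, Nat.ne_zero_of_lt hm]
  have hmx : singleOne n m ≠ x := fun h' => by
    simpa [hx_zero, singleOne_apply_zero_of_lt hm] using congrFun h' 0
  obtain ⟨i, hi, hy⟩ := hf.exists_pow_apply_eq ⊥ (flipLast x)
  have hi₀ : 0 < i := Nat.pos_of_ne_zero fun h₀ => by
    simpa [h₀, flipLast_last, hx_last] using congrFun hy (Fin.last n)
  rw [hx] at h
  have hbot : (swap x (flipLast x) * f) ⊥ = singleOne n 0 := by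
    have hn : n ≠ 0 := Nat.ne_zero_of_lt hm
    rw [Perm.mul_apply, hf.apply_bot, swap_apply_of_ne_of_ne]
    · exact fun h' => by simpa [singleOne_zero_last, hx_last] using congrFun h' (Fin.last n)
    · exact fun h' => by
        simpa [singleOne_apply, flipLast, update_apply, hx_zero, hn, hn.symm] using congrFun h' 0
  obtain ⟨v, hv, hv_last, hflip⟩ :=
    (hf.isShift.swap_flipLast_mul x).exists_not_sameCycle_flipLast hbot
      (hf.not_sameCycle_swap_mul h hi hi₀ hy (flipLast_ne x) hx hmx)
  have hvx : v ≠ x := fun h' => by simp [h', hx_last] at hv_last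
  obtain ⟨a, ha, rfl⟩ := (hf.eq_or_exists_of_sameCycle_swap_mul h hi hi₀ hy hv).resolve_left hvx
  have ha₀ : 0 < a := Nat.pos_of_ne_zero fun h₀ => by simp [h₀] at hv_last
  refine ⟨_, hf.isEulerian_swap_flipLast_mul fun h' => hflip (hv.trans h'), a, ha.trans hi,
    fun k hk => hf.swap_mul_swap_mul_pow_apply h hi hy ha hk hflip, hv_last, ?_⟩
  rw [hf.swap_mul_swap_mul_pow_apply_self h hi hy ha ha₀ hflip, flipLast_last, hv_last,
    Bool.not_true]

end Circuits

section Reading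

variable {n : ℕ} {f g : Perm (Fin (n + 1) → Bool)} {v w : Fin (n + 1) → Bool} {x y : List Bool}

/-- The periodic sequence whose period is the string `x`. -/
def cyclicRead (x : List Bool) (i : ℕ) : Bool := x.getD (i % x.length) false

theorem cyclicRead_of_lt {i : ℕ} (hi : i < x.length) : cyclicRead x i = x[i] := by
  rw [cyclicRead, Nat.mod_eq_of_lt hi, List.getD_eq_getElem]

theorem take_drop_append_take (hx : n < x.length) {i : ℕ} (hi : i < x.length) :
    ((x ++ x.take n).drop i).take (n + 1) = List.ofFn (window n (cyclicRead x) i) := by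
  refine List.ext_getElem (by
    simp only [List.length_take, List.length_drop, List.length_append, List.length_ofFn]
    omega) fun j _ hj => ?_
  rw [List.length_ofFn] at hj
  simp only [List.getElem_take, List.getElem_drop, List.getElem_ofFn, window]
  rcases Nat.lt_or_ge (i + j) x.length with h | h
  · rw [List.getElem_append_left h, cyclicRead_of_lt h]
  · rw [List.getElem_append_right h, List.getElem_take, cyclicRead, Nat.mod_eq_sub_mod h,
      Nat.mod_eq_of_lt (by omega), List.getD_eq_getElem]

theorem occ_eq_one_iff (u x : List Bool) :
    occ u x = 1 ↔ ∃! i, i < x.length + 1 - u.length ∧ (x.drop i).take u.length = u := by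
  rw [occ, ← List.toFinset_card_of_nodup (List.nodup_range.filter _), Finset.card_eq_one,
    Finset.singleton_iff_unique_mem]
  simp only [List.mem_toFinset, List.mem_filter, List.mem_range, decide_eq_true_eq]

theorem isDeBruijn_iff : IsDeBruijn (n + 1) x ↔ x.length = 2 ^ (n + 1) ∧
    Bijective (fun k : Fin (2 ^ (n + 1)) => window n (cyclicRead x) k) := by
  refine and_congr_right fun hx => ?_
  have hn : n + 1 < 2 ^ (n + 1) := Nat.lt_two_pow_self
  have hocc : ∀ w : Fin (n + 1) → Bool, occ (List.ofFn w) (x ++ x.take n) = 1 ↔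
      ∃! k : Fin (2 ^ (n + 1)), window n (cyclicRead x) k = w := by
    intro w
    have hcount : (x ++ x.take n).length + 1 - (List.ofFn w).length = 2 ^ (n + 1) := by
      rw [List.length_append, List.length_take, hx, List.length_ofFn]
      omega
    rw [occ_eq_one_iff, hcount, List.length_ofFn]
    have hwindow : ∀ i, i < 2 ^ (n + 1) ∧ ((x ++ x.take n).drop i).take (n + 1) = List.ofFn w ↔
        ∃ hi : i < 2 ^ (n + 1), window n (cyclicRead x) (⟨i, hi⟩ : Fin _) = w := fun i => by
      rw [← exists_prop]
      refine exists_congr fun hi => ?_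
      rw [take_drop_append_take (by omega) (by omega), List.ofFn_injective.eq_iff]
    simp only [hwindow]
    exact ⟨fun ⟨i, ⟨hi, h⟩, huniq⟩ => ⟨⟨i, hi⟩, h, fun k hk => Fin.ext (huniq k ⟨k.isLt, hk⟩)⟩,
      fun ⟨k, h, huniq⟩ => ⟨k, ⟨k.isLt, h⟩, fun i ⟨hi, h⟩ => congrArg Fin.val (huniq ⟨i, hi⟩ h)⟩⟩
  rw [bijective_iff_existsUnique, Nat.add_sub_cancel]
  simp only [← hocc]
  refine ⟨fun h w => h _ List.length_ofFn, fun h u hu => ?_⟩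
  have hofFn : List.ofFn (fun j : Fin (n + 1) => u[j]) = u :=
    List.ext_getElem (by rw [List.length_ofFn, hu]) fun i _ _ => by
      rw [List.getElem_ofFn, Fin.getElem_fin]
  exact hofFn ▸ h _

/-- The string of first letters of the words `w, f w, f² w, …`: for an Eulerian circuit `f`, the
de Bruijn string read along `f` starting with the word `w`. -/
def readOff (f : Perm (Fin (n + 1) → Bool)) (w : Fin (n + 1) → Bool) : List Bool :=
  List.ofFn fun k : Fin (2 ^ (n + 1)) => (f ^ (k : ℕ)) w 0

theorem length_readOff : (readOff f w).length = 2 ^ (n + 1) := List.length_ofFn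

theorem IsEulerian.cyclicRead_readOff (hf : IsEulerian f) (w : Fin (n + 1) → Bool) (i : ℕ) :
    cyclicRead (readOff f w) i = (f ^ i) w 0 := by
  have hi : i % 2 ^ (n + 1) < 2 ^ (n + 1) := Nat.mod_lt _ (by positivity)
  rw [cyclicRead, length_readOff, List.getD_eq_getElem _ _ (by rwa [length_readOff])]
  simp only [readOff, List.getElem_ofFn, hf.pow_mod_apply]

theorem IsEulerian.window_readOff (hf : IsEulerian f) (w : Fin (n + 1) → Bool) (k : ℕ) :
    window n (cyclicRead (readOff f w)) k = (f ^ k) w := by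
  funext j
  rw [window, hf.cyclicRead_readOff, hf.isShift.pow_add_apply_zero]

theorem IsEulerian.pow_apply_zero_of_readOff_eq_append (hf : IsEulerian f) {b : Bool}
    (h : readOff f w = x ++ b :: y) : (f ^ x.length) w 0 = b := by
  rw [← hf.cyclicRead_readOff, h, cyclicRead_of_lt (by simp)]
  simp

theorem IsEulerian.isDeBruijn_readOff (hf : IsEulerian f) (w : Fin (n + 1) → Bool) :
    IsDeBruijn (n + 1) (readOff f w) := by
  refine isDeBruijn_iff.2 ⟨length_readOff, fun k l hkl => ?_, fun v => ?_⟩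
  · simp only [hf.window_readOff] at hkl
    exact Fin.ext (hf.injOn_pow_apply w k.isLt l.isLt hkl)
  · obtain ⟨k, hk, rfl⟩ := hf.exists_pow_apply_eq w v
    exact ⟨⟨k, hk⟩, hf.window_readOff w k⟩

theorem IsDeBruijn.exists_eq_readOff (hx : IsDeBruijn (n + 1) x) :
    ∃ f w, IsEulerian f ∧ x = readOff (n := n) f w := by
  obtain ⟨hlen, hbij⟩ := isDeBruijn_iff.1 hx
  let e := Equiv.ofBijective _ hbij
  have he : ∀ k : ℕ, e (Fin.ofNat _ k) = window n (cyclicRead x) k := fun k => by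
    funext j
    simp only [e, ofBijective_apply, window, cyclicRead, hlen, Fin.val_ofNat, Nat.mod_add_mod]
  let f := e.permCongr (Equiv.addRight 1)
  have hf : ∀ k : ℕ, f (window n (cyclicRead x) k) = window n (cyclicRead x) (k + 1) := fun k => by
    rw [← he, ← he, permCongr_apply, symm_apply_apply]
    refine congrArg e (Fin.ext ?_)
    simp [Fin.val_add]
  have hpow (k : ℕ) : (f ^ k) (window n (cyclicRead x) 0) = window n (cyclicRead x) k := by
    induction k with
    | zero => rfl
    | succ k ih => rw [pow_succ', Perm.mul_apply, ih, hf]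
  have horbit : ∀ w, f.SameCycle (window n (cyclicRead x) 0) w := fun w => by
    obtain ⟨k, rfl⟩ := hbij.surjective w
    exact ⟨k, by exact_mod_cast hpow k⟩
  refine ⟨f, window n (cyclicRead x) 0, ⟨fun w => ?_, fun v w => (horbit v).symm.trans (horbit w)⟩,
    ?_⟩
  · obtain ⟨k, rfl⟩ := hbij.surjective w
    rw [hf, init_window_succ]
  · refine List.ext_getElem (by rw [hlen, length_readOff]) fun i hi _ => ?_
    simp [readOff, hpow, window, cyclicRead_of_lt hi]

theorem IsEulerian.exists_pow_apply_eq_of_infix (hf : IsEulerian f)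
    (h : List.ofFn v <:+: readOff f w) : ∃ k, k + n < 2 ^ (n + 1) ∧ (f ^ k) w = v := by
  have hn : n < (readOff f w).length :=
    length_readOff.symm ▸ Nat.lt_two_pow_self.trans (Nat.pow_lt_pow_succ one_lt_two)
  obtain ⟨s, t, hst⟩ := h
  have hlen := congrArg List.length hst
  simp only [List.length_append, List.length_ofFn, length_readOff] at hlen
  refine ⟨s.length, by omega, List.ofFn_injective ?_⟩
  rw [← hf.window_readOff, ← take_drop_append_take hn (by rw [length_readOff]; omega), ← hst]
  simp [List.take_append]

theorem IsShift.take_readOff (hf : IsShift f) (w : Fin (n + 1) → Bool) :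
    (readOff f w).take (n + 1) = List.ofFn w := by
  have hn : n + 1 < 2 ^ (n + 1) := Nat.lt_two_pow_self
  refine List.ext_getElem (by
    rw [List.length_take, length_readOff, List.length_ofFn, min_eq_left hn.le]) fun j _ hj => ?_
  rw [List.length_ofFn] at hj
  rw [List.getElem_take, List.getElem_ofFn]
  have := hf.pow_add_apply_zero w 0 ⟨j, hj⟩
  simpa [readOff] using this

theorem replicate_false_prefix_readOff_iff (hf : IsShift f) :
    List.replicate (n + 1) false <+: readOff f w ↔ w = ⊥ := by
  rw [List.prefix_iff_eq_take, List.length_replicate, hf.take_readOff, ← List.ofFn_const,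
    List.ofFn_injective.eq_iff, eq_comm]
  rfl

theorem IsEulerian.readOff_lt (hf : IsEulerian f) (hg : IsEulerian g) {a : ℕ}
    (ha : a < 2 ^ (n + 1)) (heq : ∀ k < a, (g ^ k) ⊥ = (f ^ k) ⊥)
    (hfa : (f ^ a) ⊥ (Fin.last n) = true) (hga : (g ^ a) ⊥ (Fin.last n) = false) :
    readOff g ⊥ < readOff f ⊥ := by
  have han : a + n < 2 ^ (n + 1) := by
    by_contra! h
    have hn : n < 2 ^ (n + 1) := Nat.lt_two_pow_self.trans (Nat.pow_lt_pow_succ one_lt_two)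
    have hwrap : (a + n) % 2 ^ (n + 1) ≤ n := by
      rw [Nat.mod_eq_sub_mod h, Nat.mod_eq_of_lt] <;> omega
    have hfalse := hf.isShift.pow_bot_apply_zero hwrap
    rw [hf.pow_mod_apply, hf.isShift.pow_add_apply_zero_eq_last, hfa] at hfalse
    contradiction
  refine List.lt_iff_exists.2 (.inr ⟨a + n, han.trans_eq length_readOff.symm,
    han.trans_eq length_readOff.symm, fun i hi => ?_, ?_⟩)
  · simp only [readOff, List.getElem_ofFn]
    rcases Nat.lt_or_ge i n with hin | hin
    · rw [hg.isShift.pow_bot_apply_zero hin.le, hf.isShift.pow_bot_apply_zero hin.le]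
    · obtain ⟨k, rfl⟩ := Nat.exists_eq_add_of_le' hin
      rw [hg.isShift.pow_add_apply_zero_eq_last, hf.isShift.pow_add_apply_zero_eq_last,
        heq k (by omega)]
  · simp [readOff, hg.isShift.pow_add_apply_zero_eq_last, hf.isShift.pow_add_apply_zero_eq_last,
      hga, hfa]

end Reading

section Least

variable {n : ℕ} {f : Perm (Fin (n + 1) → Bool)} {v : Fin (n + 1) → Bool} {x y : List Bool}

theorem replicate_false_prefix_of_le {m : ℕ} (hxy : x ≤ y) (hlen : x.length = y.length)
    (hy : List.replicate m false <+: y) : List.replicate m false <+: x := by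
  induction m generalizing x y with
  | zero => exact List.nil_prefix
  | succ m ih =>
    obtain ⟨t, rfl⟩ := hy
    rw [List.replicate_succ, List.cons_append] at hxy hlen
    obtain ⟨b, x, rfl⟩ := List.exists_cons_of_length_eq_add_one hlen
    rw [← not_lt, List.cons_lt_cons_iff, not_or, Bool.lt_iff] at hxy
    obtain rfl : b = false := by simpa using hxy.1
    refine List.cons_prefix_cons.2 ⟨rfl, ih ?_ (by simpa using hlen) (List.prefix_append _ t)⟩
    exact not_lt.1 fun h => hxy.2 ⟨rfl, h⟩

theorem db_spec (n : ℕ) : IsDeBruijn (n + 1) (db (n + 1)) ∧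
    ∀ y, IsDeBruijn (n + 1) y → db (n + 1) ≤ y := by
  obtain ⟨f, hf⟩ := exists_isEulerian n
  have hex : ∃ x, IsDeBruijn (n + 1) x ∧ ∀ y, IsDeBruijn (n + 1) y → x ≤ y :=
    Set.exists_min_image {x | IsDeBruijn (n + 1) x} id
      ((List.finite_length_eq Bool (2 ^ (n + 1))).subset fun x hx => hx.1)
      ⟨_, hf.isDeBruijn_readOff ⊥⟩
  rw [db, dif_pos hex]
  exact hex.choose_spec

theorem exists_isEulerian_db_eq (n : ℕ) :
    ∃ f : Perm (Fin (n + 1) → Bool), IsEulerian f ∧ db (n + 1) = readOff f ⊥ := by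
  obtain ⟨hdb, hmin⟩ := db_spec n
  obtain ⟨f, w, hf, hw⟩ := hdb.exists_eq_readOff
  refine ⟨f, hf, ?_⟩
  have hle : readOff f w ≤ readOff f ⊥ := hw ▸ hmin _ (hf.isDeBruijn_readOff ⊥)
  rw [hw, ← (replicate_false_prefix_readOff_iff hf.isShift).1 (replicate_false_prefix_of_le hle
    (by rw [length_readOff, length_readOff])
      ((replicate_false_prefix_readOff_iff hf.isShift).2 rfl))]

theorem exists_db_eq_append (n : ℕ) :
    ∃ z, db (n + 1) = List.replicate (n + 1) false ++ true :: z := by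
  obtain ⟨f, hf, hdb⟩ := exists_isEulerian_db_eq n
  obtain ⟨z, hz⟩ := (replicate_false_prefix_readOff_iff hf.isShift).2 rfl
  have hz_length : z.length ≠ 0 := fun h => by
    have hlen := congrArg List.length hz
    rw [length_readOff, List.length_append, List.length_replicate, h] at hlen
    exact Nat.lt_two_pow_self.ne hlen
  obtain ⟨b, z, rfl⟩ := List.exists_cons_of_length_pos (Nat.pos_of_ne_zero hz_length)
  have hone := hf.isShift.pow_add_apply_zero_eq_last ⊥ 1
  rw [Nat.add_comm 1 n, pow_one, hf.apply_bot, singleOne_zero_last] at hone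
  have hb := hf.pow_apply_zero_of_readOff_eq_append hz.symm
  rw [List.length_replicate, hone] at hb
  exact ⟨z, by rw [hdb, ← hz, hb]⟩

theorem IsEulerian.exists_readOff_lt (hf : IsEulerian f) (hn : 0 < n) (hv : f (f v) = ⊥)
    (hv₀ : v 0 = false) :
    ∃ g : Perm (Fin (n + 1) → Bool), IsEulerian g ∧ readOff g ⊥ < readOff f ⊥ := by
  obtain ⟨m, rfl⟩ := Nat.exists_eq_add_of_le' hn
  have htail : Fin.tail v = Fin.tail (singleOne (m + 1) m) := by
    rw [← hf.isShift, hf.eq_singleOne_of_apply_eq_bot hv, init_singleOne_succ]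
  obtain rfl : v = singleOne (m + 1) m := by
    rw [← Fin.cons_self_tail v, ← Fin.cons_self_tail (singleOne _ _), htail, hv₀,
      singleOne_apply_zero_of_lt m.lt_succ_self]
  obtain ⟨g, hg, a, ha, heq, hfa, hga⟩ := hf.exists_exchange m.lt_succ_self hv
  exact ⟨g, hg, hf.readOff_lt hg ha heq hfa hga⟩

theorem true_true_suffix_db (hn : 0 < n) : [true, true] <:+ db (n + 1) := by
  obtain ⟨f, hf, hdb⟩ := exists_isEulerian_db_eq n
  obtain ⟨l, r, hlr, hr⟩ : ∃ l r, readOff f ⊥ = l ++ r ∧ r.length = 2 :=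
    ⟨_, _, (List.take_append_drop (2 ^ (n + 1) - 2) _).symm, by
      rw [List.length_drop, length_readOff, Nat.sub_sub_self (Nat.le_self_pow n.succ_ne_zero 2)]⟩
  obtain ⟨a, b, rfl⟩ := List.length_eq_two.1 hr
  have hl : l.length + 1 + 1 = 2 ^ (n + 1) := by
    rw [← length_readOff (f := f) (w := ⊥), hlr, List.length_append, hr]
  have ha : (f ^ l.length) ⊥ 0 = a := hf.pow_apply_zero_of_readOff_eq_append hlr
  have hb : (f ^ (l.length + 1)) ⊥ 0 = b := by
    simpa using hf.pow_apply_zero_of_readOff_eq_append (x := l ++ [a]) (y := []) (by simp [hlr])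
  have hend : f (f ((f ^ l.length) ⊥)) = ⊥ := by
    have hreturn := hf.pow_two_pow_apply ⊥
    rwa [← hl, pow_succ', Perm.mul_apply, pow_succ', Perm.mul_apply] at hreturn
  rw [pow_succ', Perm.mul_apply, hf.eq_singleOne_of_apply_eq_bot hend,
    singleOne_self_apply_zero] at hb
  obtain rfl : a = true := by
    by_contra h
    obtain ⟨g, hg, hlt⟩ := hf.exists_readOff_lt hn hend (ha.trans (Bool.eq_false_of_not_eq_true h))
    exact ((db_spec n).2 _ (hg.isDeBruijn_readOff ⊥)).not_gt (hdb ▸ hlt)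
  exact ⟨l, by rw [hdb, hlr, hb]⟩

theorem ofFn_singleOne_self (n : ℕ) :
    List.ofFn (singleOne n n) = true :: List.replicate n false := by
  simp [List.ofFn_succ, singleOne_apply]

theorem not_infix_db (hn : 0 < n) : ¬ true :: List.replicate n false <:+: db (n + 1) := by
  obtain ⟨f, hf, hdb⟩ := exists_isEulerian_db_eq n
  rw [hdb, ← ofFn_singleOne_self]
  intro h
  obtain ⟨k, hk, hkn⟩ := hf.exists_pow_apply_eq_of_infix h
  have hpre : f (f.symm ⊥) = ⊥ := f.apply_symm_apply ⊥
  exact hf.pow_apply_ne hpre (by omega) (hkn.trans (hf.eq_singleOne_of_apply_eq_bot hpre).symm)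

end Least

section Gap

variable {q : ℕ} {L L₁ L₂ : List Bool}

/-- In `0 :: L`, no factor `01` is followed by `0^q 1`, nor by zeros only up to the end. The leading
`0` and the condition at the end make the property stable under concatenation. -/
structure AvoidsGap (q : ℕ) (L : List Bool) : Prop where
  not_infix : ¬ false :: true :: (List.replicate q false ++ [true]) <:+: false :: L
  not_suffix : ∀ j, ¬ false :: true :: List.replicate j false <:+ false :: L

theorem AvoidsGap.append (h₁ : AvoidsGap q L₁) (h₂ : AvoidsGap q L₂) :
    AvoidsGap q (L₁ ++ L₂) where
  not_infix h := by
    rcases List.infix_append_iff_ne_nil.1 (show _ <:+: false :: L₁ ++ L₂ from h) with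
      h | h | ⟨l₁, l₂, hne₁, hne₂, heq, hl₁, hl₂⟩
    · exact h₁.not_infix h
    · exact h₂.not_infix (List.infix_cons h)
    match l₁, heq with
    | [_], heq =>
      obtain ⟨-, rfl⟩ := List.cons_eq_cons.1 heq
      exact h₂.not_infix (List.cons_prefix_cons.2 ⟨rfl, hl₂⟩).isInfix
    | _ :: _ :: l₁, heq =>
      simp only [List.cons_append, List.cons.injEq] at heq
      obtain ⟨rfl, rfl, heq⟩ := heq
      rcases List.append_eq_append_iff.1 heq with ⟨c, rfl, hc⟩ | ⟨c, hc, -⟩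
      · obtain rfl : c = [] :=
          ((List.append_eq_singleton_iff.1 hc.symm).resolve_right fun h => hne₂ h.2).1
        exact h₁.not_suffix q (by simpa using hl₁)
      · rw [eq_comm, List.append_eq_replicate_iff] at hc
        exact h₁.not_suffix _ (by rwa [hc.2.1] at hl₁)
  not_suffix j h := by
    rcases List.suffix_or_suffix_of_suffix h (List.suffix_append (false :: L₁) L₂) with h' | ⟨l, hl⟩
    · exact h₂.not_suffix j (h'.trans (List.suffix_cons _ _))
    rw [← hl] at h
    have hl₁ : l <:+ false :: L₁ := List.suffix_append_self_iff.1 h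
    match l, hl with
    | [], hl => exact h₂.not_suffix j (hl ▸ List.suffix_cons false L₂)
    | [_], hl =>
      obtain ⟨rfl, rfl⟩ := List.cons_eq_cons.1 hl
      exact h₂.not_suffix j List.suffix_rfl
    | _ :: _ :: l, hl =>
      simp only [List.cons_append, List.cons.injEq] at hl
      obtain ⟨rfl, rfl, hl⟩ := hl
      rw [List.append_eq_replicate_iff] at hl
      exact h₁.not_suffix _ (by rwa [hl.2.1] at hl₁)

theorem AvoidsGap.flatten {Ls : List (List Bool)} (h : ∀ L ∈ Ls, AvoidsGap q L) :
    AvoidsGap q Ls.flatten := by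
  induction Ls with
  | nil => exact ⟨fun h => by simpa using h.length_le, fun j h => by simpa using h.length_le⟩
  | cons L Ls ih =>
    rw [List.forall_mem_cons] at h
    exact h.1.append (ih h.2)

theorem infix_of_true_cons_infix_replicate_append {a : ℕ} {u : List Bool}
    (h : true :: u <:+: List.replicate a false ++ L) : true :: u <:+: L := by
  induction a with
  | zero => exact h
  | succ a ih =>
    rw [List.replicate_succ, List.cons_append, List.infix_cons_iff] at h
    exact ih (h.resolve_left (by simp))

theorem infix_of_concat_true_infix_append_replicate {b : ℕ} {u : List Bool}
    (h : u ++ [true] <:+: L ++ List.replicate b false) : u ++ [true] <:+: L := by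
  rw [← List.reverse_infix] at h ⊢
  rw [List.reverse_append, List.reverse_append, List.reverse_replicate] at h
  simpa using infix_of_true_cons_infix_replicate_append h

theorem not_zero_one_zeros_suffix (u : List Bool) (b j : ℕ) :
    ¬ false :: true :: List.replicate j false <:+ u ++ true :: true :: List.replicate b false := by
  rw [← List.reverse_prefix]
  simp only [List.reverse_append, List.reverse_cons, List.reverse_replicate, List.append_assoc,
    List.cons_append, List.nil_append]
  induction b generalizing j with
  | zero => cases j <;> simp [List.replicate_succ]
  | succ b ih => cases j <;> simp [List.replicate_succ, ih]

theorem avoidsGap_replicate_append_replicate {a b : ℕ}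
    (hL : ¬ true :: (List.replicate q false ++ [true]) <:+: L) (hend : [true, true] <:+ L) :
    AvoidsGap q (List.replicate a false ++ L ++ List.replicate b false) where
  not_infix h := by
    rw [List.append_assoc] at h
    replace h := (List.suffix_cons _ _).isInfix.trans h
    have h' := infix_of_true_cons_infix_replicate_append (a := a + 1) h
    exact hL (infix_of_concat_true_infix_append_replicate (u := true :: List.replicate q false) h')
  not_suffix j h := by
    obtain ⟨u, rfl⟩ := hend
    exact not_zero_one_zeros_suffix (false :: (List.replicate a false ++ u)) b j (by simpa using h)

end Gap

theorem avoidsGap_rotate_db {n q i : ℕ} (hn : 0 < n) (hq : n ≤ q) (hi : i ≤ n + 1) :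
    AvoidsGap q ((db (n + 1)).rotate i) := by
  obtain ⟨z, hz⟩ := exists_db_eq_append n
  have hrot : (db (n + 1)).rotate i =
      List.replicate (n + 1 - i) false ++ true :: z ++ List.replicate i false := by
    rw [hz, List.rotate_eq_drop_append_take (by
      rw [List.length_append, List.length_replicate]
      omega), List.drop_append_of_le_length
      (by simpa), List.take_append_of_le_length (by simpa), List.drop_replicate,
      List.take_replicate, Nat.min_eq_left hi]
  have hend := true_true_suffix_db hn
  have hgap := not_infix_db hn
  rw [hz] at hend hgap
  rw [hrot]
  refine avoidsGap_replicate_append_replicate (fun h => hgap ?_) ?_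
  · obtain ⟨c, rfl⟩ := Nat.exists_eq_add_of_le hq
    refine List.IsInfix.trans ?_ (h.trans (List.suffix_append _ _).isInfix)
    exact ⟨[], List.replicate c false ++ [true], by
      rw [← List.replicate_append_replicate, List.nil_append, List.cons_append, List.append_assoc]⟩
  · refine List.suffix_of_suffix_length_le hend (List.suffix_append _ _) ?_
    have hlen := congrArg List.length hz
    rw [(db_spec n).1.1, List.length_append, List.length_replicate, pow_succ] at hlen
    have : n < 2 ^ n := Nat.lt_two_pow_self
    change 2 ≤ (true :: z).length
    omega

theorem avoidsGap_Sblk {n q : ℕ} (hn : 0 < n) (hq : n ≤ q) : AvoidsGap q (Sblk (n + 1)) := by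
  refine .flatten (List.forall_mem_map.2 fun i hi => .flatten fun L hL => ?_)
  rw [List.eq_of_mem_replicate hL]
  exact avoidsGap_rotate_db hn hq
    ((List.mem_range.1 hi).le.trans (Nat.ordProj_le 2 n.succ_ne_zero))

theorem Sblk_one : Sblk 1 = [false, true] := by
  obtain ⟨z, hz⟩ := exists_db_eq_append 0
  have hlen := hz ▸ (db_spec 0).1.1
  have hdb : db 1 = [false, true] := by
    obtain rfl : z = [] := by simpa using hlen
    exact hz
  simp [Sblk, Bblk, oddPart, hdb]

theorem exists_Sblk_two_eq : ∃ r, Sblk 2 = false :: false :: true :: r := by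
  obtain ⟨z, hz⟩ := exists_db_eq_append 1
  have hfact : Nat.factorization 2 2 = 1 := Nat.prime_two.factorization_self
  refine ⟨z ++ Bblk 2 1 1, ?_⟩
  simp [Sblk, oddPart, hfact, Bblk, List.range_succ, show db 2 = _ from hz, List.replicate_succ]

theorem exists_Sfin_eq_append (n : ℕ) :
    ∃ Y, Sfin (n + 2) = false :: true :: false :: false :: true :: Y ∧
      AvoidsGap (n + 1) (false :: false :: true :: Y) := by
  obtain ⟨r, hr⟩ := exists_Sblk_two_eq
  have hsplit : Sfin (n + 2) =
      Sblk 1 ++ ((List.range (n + 1)).map fun k => Sblk (k + 1 + 1)).flatten := by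
    rw [Sfin, List.range_succ_eq_map, List.map_cons, List.flatten_cons, List.map_map]
    rfl
  have hgap : AvoidsGap (n + 1) ((List.range (n + 1)).map fun k => Sblk (k + 1 + 1)).flatten :=
    .flatten (List.forall_mem_map.2 fun k hk => avoidsGap_Sblk k.succ_pos (List.mem_range.1 hk))
  rw [List.range_succ_eq_map, List.map_cons, List.flatten_cons, hr] at hsplit hgap
  exact ⟨_, by rw [hsplit, Sblk_one]; rfl, hgap⟩

/-- For all sufficiently large `n`, the string `0·1·0^{n-2}·1` does not occur as a
substring of `S_1 S_2 ⋯ S_{n-1}`. -/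
theorem stmt7 :
    ∃ N : ℕ, ∀ n, N ≤ n →
      ¬ ([false, true] ++ List.replicate (n - 2) false ++ [true]) <:+: Sfin (n - 1) := by
  refine ⟨5, fun n hn h => ?_⟩
  obtain ⟨k, rfl⟩ := Nat.exists_eq_add_of_le' hn
  obtain ⟨Y, hY, hgap⟩ := exists_Sfin_eq_append (k + 2)
  have h' : false :: true :: (List.replicate (k + 3) false ++ [true]) <:+: Sfin (k + 2 + 2) := h
  rw [hY, List.infix_cons_iff, List.infix_cons_iff] at h'
  rcases h' with h | h | h
  · simp [List.replicate_succ] at h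
  · simp at h
  · exact hgap.not_infix (List.infix_cons h)
end

section
/- For every odd n ≥ 3 and every binary string w with |w| ≥ n, all occurrences of w as a substring of S_n = db(n)^n that have a following bit inside S_n are followed by the same bit. -/
/-!
A de Bruijn string `x` of order `n` contains each word of length `n` in exactly one cyclic window,
so the first `n` letters of `w` determine, modulo `x.length`, where `w` can occur in a power of `x`.
Powers of `x` have period `x.length`, so the letter following `w` is determined as well.
-/

section Periodic

variable {α : Type*}

theorem hasPeriod_append_take_self (l : List α) (k : ℕ) :
    (l ++ l.take k).HasPeriod l.length := by
  rw [List.HasPeriod, List.take_left, List.prefix_append_right_inj]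
  exact (l.take_prefix k).trans (List.prefix_append _ _)

theorem take_length_flatten_replicate_prefix (l : List α) (m : ℕ) :
    (List.replicate m l).flatten.take l.length <+: l := by
  cases m with
  | zero => simp
  | succ m => rw [List.replicate_succ, List.flatten_cons, List.take_left]

theorem hasPeriod_flatten_replicate (l : List α) (m : ℕ) :
    (List.replicate m l).flatten.HasPeriod l.length := by
  cases m with
  | zero => exact List.hasPeriod_empty _
  | succ m =>
    have flatten_succ : (List.replicate (m + 1) l).flatten = (List.replicate m l).flatten ++ l := by
      simp only [List.replicate_succ', List.flatten_append, List.flatten_singleton]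
    rw [List.HasPeriod, List.replicate_succ, List.flatten_cons, List.take_left,
      List.prefix_append_right_inj, ← List.flatten_cons, ← List.replicate_succ, flatten_succ]
    exact List.prefix_append _ _

theorem prefix_drop_mod_of_hasPeriod {u v w : List α} {p i : ℕ} (hp : 0 < p)
    (hu : u.HasPeriod p) (hv : v.HasPeriod p) (huv : u.take p <+: v)
    (hlen : i % p + w.length ≤ v.length) (hw : w <+: u.drop i) : w <+: v.drop (i % p) := by
  rw [List.prefix_iff_getElem?] at hw ⊢
  intro k hk
  have huk : u[i + k]? = some w[k] := List.getElem?_drop.symm.trans (hw k hk)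
  have hik : i + k < u.length := (List.getElem?_eq_some_iff.1 huk).1
  have hmod : (i + k) % p < p := Nat.mod_lt _ hp
  have hmod_le : (i + k) % p ≤ i + k := Nat.mod_le _ _
  calc (v.drop (i % p))[k]?
    _ = v[i % p + k]? := List.getElem?_drop
    _ = v[(i + k) % p]? := by rw [← hv.getElem?_mod _ _ _ (by omega), Nat.mod_add_mod]
    _ = (u.take p)[(i + k) % p]? := by
      have hlt : (i + k) % p < (u.take p).length := by rw [List.length_take]; omega
      rw [List.prefix_iff_getElem?.1 huv _ hlt, List.getElem?_eq_getElem hlt]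
    _ = u[(i + k) % p]? := List.getElem?_take_of_lt hmod
    _ = u[i + k]? := hu.getElem?_mod _ _ _ hik
    _ = some w[k] := huk

end Periodic

section DeBruijn

variable {n : ℕ} {x : List Bool}

theorem eq_of_occ_le_one {w : List Bool} {a b : ℕ} (hocc : occ w x ≤ 1)
    (ha : a ≤ x.length) (hb : b ≤ x.length) (hwa : w <+: x.drop a) (hwb : w <+: x.drop b) :
    a = b := by
  let positions := (List.range (x.length + 1 - w.length)).filter
    (fun i => decide ((x.drop i).take w.length = w))
  have mem_positions {i : ℕ} (hi : i ≤ x.length) (hw : w <+: x.drop i) : i ∈ positions := by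
    have hlen := hw.length_le
    rw [List.length_drop] at hlen
    simp only [positions, List.mem_filter, List.mem_range, decide_eq_true_eq]
    exact ⟨by omega, (List.prefix_iff_eq_take.1 hw).symm⟩
  have ha_mem := mem_positions ha hwa
  have hb_mem := mem_positions hb hwb
  obtain ⟨c, hc : positions = [c]⟩ :=
    List.length_eq_one_iff.1 (hocc.antisymm (List.length_pos_of_mem ha_mem))
  rw [hc, List.mem_singleton] at ha_mem hb_mem
  exact ha_mem.trans hb_mem.symm

theorem IsDeBruijn.modEq_of_prefix_drop (hx : IsDeBruijn n x) {u w : List Bool} {p q : ℕ}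
    (hu : u.HasPeriod x.length) (hux : u.take x.length <+: x) (hw : n ≤ w.length)
    (hp : w <+: u.drop p) (hq : w <+: u.drop q) : p ≡ q [MOD x.length] := by
  have hn : n < x.length := hx.1 ▸ Nat.lt_two_pow_self
  have hpos : 0 < x.length := by omega
  have hlen : (w.take n).length = n := List.length_take_of_le hw
  have hcyc : (x ++ x.take (n - 1)).length = x.length + (n - 1) := by
    rw [List.length_append, List.length_take_of_le (by omega)]
  have mod_le (i : ℕ) : i % x.length ≤ (x ++ x.take (n - 1)).length :=
    hcyc ▸ (Nat.mod_lt i hpos).le.trans (Nat.le_add_right _ _)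
  have window {i : ℕ} (hi : w <+: u.drop i) :
      w.take n <+: (x ++ x.take (n - 1)).drop (i % x.length) := by
    have hmod := Nat.mod_lt i hpos
    exact prefix_drop_mod_of_hasPeriod hpos hu (hasPeriod_append_take_self x (n - 1))
      (hux.trans (List.prefix_append _ _)) (by omega) ((w.take_prefix n).trans hi)
  exact eq_of_occ_le_one (hx.2 _ hlen).le (mod_le p) (mod_le q) (window hp) (window hq)

theorem isDeBruijn_db_of_ne_nil (h : db n ≠ []) : IsDeBruijn n (db n) := by
  unfold db at h ⊢
  split_ifs at h ⊢ with hex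
  · exact hex.choose_spec.1
  · exact absurd rfl h

theorem stmt9_general (hx : IsDeBruijn n x) (m : ℕ) (w : List Bool) (hw : n ≤ w.length)
    (p q : ℕ) (hp : ((List.replicate m x).flatten.drop p).take w.length = w)
    (hp' : p + w.length < (List.replicate m x).flatten.length)
    (hq : ((List.replicate m x).flatten.drop q).take w.length = w)
    (hq' : q + w.length < (List.replicate m x).flatten.length) :
    (List.replicate m x).flatten.getD (p + w.length) false =
      (List.replicate m x).flatten.getD (q + w.length) false := by
  have hper := hasPeriod_flatten_replicate x m
  have hpq : p ≡ q [MOD x.length] :=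
    hx.modEq_of_prefix_drop hper (take_length_flatten_replicate_prefix x m) hw
      (List.prefix_iff_eq_take.2 hp.symm) (List.prefix_iff_eq_take.2 hq.symm)
  have hnext : (p + w.length) % x.length = (q + w.length) % x.length := hpq.add_right _
  rw [List.getD_eq_getElem?_getD, List.getD_eq_getElem?_getD, ← hper.getElem?_mod _ _ _ hp',
    hnext, hper.getElem?_mod _ _ _ hq']

end DeBruijn

/-- For every odd `n ≥ 3` and every `w` with `|w| ≥ n`, all occurrences of `w` in
`S_n = db(n)^n` that have a following bit inside `S_n` are followed by the same bit. -/
theorem stmt9 (n : ℕ) (hn : 3 ≤ n) (hodd : Odd n) (w : List Bool) (hw : n ≤ w.length)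
    (p q : ℕ)
    (hp : ((Sodd n).drop p).take w.length = w) (hp' : p + w.length < (Sodd n).length)
    (hq : ((Sodd n).drop q).take w.length = w) (hq' : q + w.length < (Sodd n).length) :
    (Sodd n).getD (p + w.length) false = (Sodd n).getD (q + w.length) false :=
  stmt9_general (isDeBruijn_db_of_ne_nil fun h => by simp [Sodd, h] at hp') n w hw p q
    hp hp' hq hq'
end

section
/- For every n ≥ 2, the string 1^n does not occur as a substring of the finite string S_1 S_2 ··· S_{n−1}. -/
/-!
Every string that `Sfin (n - 1)` concatenates is a rotation of some `db m` with `m < n`, by `i < m`.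
A de Bruijn string of order `m` has no run of `m + 1` ones, since such a run contains two
occurrences of `1^m`. As the set of de Bruijn strings of order `m` is closed under rotation, its
least element begins with `0^m`, hence its rotation by `i < m` still begins with a zero. A
concatenation of strings that begin with a zero creates no new runs of ones.
-/

section Runs

variable {α : Type*} {a : α} {n : ℕ} {l l' : List α}

/-- A word which contains no run `a^n` and can be appended to any other such word without creating
one, because it does not begin with `a`. The empty word is allowed when `n ≠ 0`. -/
structure IsRunFreeBlock (a : α) (n : ℕ) (l : List α) : Prop where
  head?_ne : l.head? ≠ some a
  not_infix : ¬ List.replicate n a <:+: l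

lemma IsRunFreeBlock.nil (hn : n ≠ 0) : IsRunFreeBlock a n [] where
  head?_ne := by simp
  not_infix := by simpa using hn

lemma IsRunFreeBlock.not_infix_append (hl : ¬ List.replicate n a <:+: l)
    (hl' : IsRunFreeBlock a n l') : ¬ List.replicate n a <:+: l ++ l' := by
  intro h
  rcases List.infix_append_iff_ne_nil.1 h with h | h | ⟨u, v, -, hv, huv, -, hvl'⟩
  · exact hl h
  · exact hl'.not_infix h
  · obtain ⟨b, v, rfl⟩ := List.exists_cons_of_ne_nil hv
    have hb : b = a := List.eq_of_mem_replicate (n := n) (by simp [huv])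
    obtain ⟨r, rfl⟩ := hvl'
    exact hl'.head?_ne (by simp [hb])

lemma IsRunFreeBlock.append (hl : IsRunFreeBlock a n l) (hl' : IsRunFreeBlock a n l') :
    IsRunFreeBlock a n (l ++ l') where
  head?_ne := by
    cases l with
    | nil => simpa using hl'.head?_ne
    | cons b l => simpa using hl.head?_ne
  not_infix := hl'.not_infix_append hl.not_infix

lemma IsRunFreeBlock.flatten {L : List (List α)} (hn : n ≠ 0)
    (hL : ∀ l ∈ L, IsRunFreeBlock a n l) : IsRunFreeBlock a n L.flatten := by
  induction L with
  | nil => exact .nil hn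
  | cons l L ih =>
    rw [List.forall_mem_cons] at hL
    exact hL.1.append (ih hL.2)

lemma IsRunFreeBlock.take (hl : IsRunFreeBlock a n l) (i : ℕ) : IsRunFreeBlock a n (l.take i) where
  head?_ne := by
    rw [List.head?_take]
    split_ifs
    · simp
    · exact hl.head?_ne
  not_infix h := hl.not_infix (h.trans (List.take_prefix i l).isInfix)

lemma IsRunFreeBlock.rotate {i : ℕ} (hl : IsRunFreeBlock a n l) (hi : i < l.length)
    (hia : l[i]? ≠ some a) : IsRunFreeBlock a n (l.rotate i) where
  head?_ne := by rwa [List.head?_rotate hi]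
  not_infix := by
    rw [List.rotate_eq_drop_append_take hi.le]
    exact (hl.take i).not_infix_append
      fun h => hl.not_infix (h.trans (List.drop_suffix i l).isInfix)

end Runs

lemma replicate_prefix_of_le {α : Type*} [LinearOrder α] {b : α} (hb : IsBot b) {m : ℕ}
    {x y : List α} (hx : m ≤ x.length) (hxy : x ≤ y) (hy : List.replicate m b <+: y) :
    List.replicate m b <+: x := by
  induction m generalizing x y with
  | zero => simp
  | succ m ih =>
    obtain ⟨c, x, rfl⟩ := List.exists_cons_of_length_pos (by lia : 0 < x.length)
    obtain ⟨r, rfl⟩ := hy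
    rw [List.replicate_succ, List.cons_append] at hxy
    rw [← not_lt, List.cons_lt_cons_iff, not_or, not_and, not_lt] at hxy
    obtain rfl : b = c := (hb c).antisymm hxy.1
    rw [List.replicate_succ, List.prefix_cons_inj]
    exact ih (by simpa using hx) (not_lt.1 (hxy.2 rfl)) (List.prefix_append _ _)

section Occurrences

lemma length_eq_of_occ_eq_one {w x p q p' q' : List Bool} (hw : occ w x = 1)
    (h : p ++ w ++ q = x) (h' : p' ++ w ++ q' = x) : p.length = p'.length := by
  obtain ⟨j, hj⟩ := List.length_eq_one_iff.1 hw
  have length_eq {u v : List Bool} (huv : u ++ w ++ v = x) : u.length = j := by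
    rw [← List.mem_singleton, ← hj, ← huv]
    simp only [List.mem_filter, List.mem_range, List.length_append, decide_eq_true_eq,
      List.append_assoc, List.drop_left, List.take_left, and_true]
    lia
  rw [length_eq h, length_eq h']

lemma cyclicPermutations_eq_map_range {α : Type*} {x : List α} (hx : x ≠ []) :
    x.cyclicPermutations = (List.range x.length).map x.rotate :=
  List.ext_getElem (by simp [hx]) (by simp)

lemma occ_append_take {w x : List Bool} (hw : w ≠ []) (hwx : w.length ≤ x.length) :
    occ w (x ++ x.take (w.length - 1)) = x.cyclicPermutations.countP w.isPrefixOf := by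
  have hw₀ : 0 < w.length := List.length_pos_iff.2 hw
  have hlen : (x ++ x.take (w.length - 1)).length + 1 - w.length = x.length := by
    simp only [List.length_append, List.length_take]
    lia
  rw [occ, hlen, cyclicPermutations_eq_map_range (List.ne_nil_of_length_pos (by lia)),
    List.countP_map, List.countP_eq_length_filter]
  congr 1
  refine List.filter_congr fun i hi => ?_
  have hi : i < x.length := List.mem_range.1 hi
  have window_eq : ((x ++ x.take (w.length - 1)).drop i).take w.length =
      (x.rotate i).take w.length := by
    rw [List.rotate_eq_drop_append_take hi.le, List.drop_append_of_le_length hi.le,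
      List.take_append, List.take_append, List.take_take, List.take_take, List.length_drop]
    congr 2
    lia
  rw [window_eq, Bool.eq_iff_iff, decide_eq_true_iff, Function.comp_apply,
    List.isPrefixOf_iff_prefix, List.prefix_iff_eq_take, eq_comm]

end Occurrences

namespace IsDeBruijn

variable {m : ℕ} {x y w : List Bool}

lemma ne_zero (hx : IsDeBruijn m x) : m ≠ 0 := by
  rintro rfl
  have hocc := hx.2 [] rfl
  simp [occ, hx.1] at hocc

lemma le_length (hx : IsDeBruijn m x) : m ≤ x.length :=
  hx.1 ▸ Nat.lt_two_pow_self.le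

lemma countP_isPrefixOf (hx : IsDeBruijn m x) (hw : w.length = m) :
    x.cyclicPermutations.countP w.isPrefixOf = 1 := by
  have hw₀ : w ≠ [] := List.ne_nil_of_length_pos (hw ▸ hx.ne_zero.pos)
  rw [← occ_append_take hw₀ (hw ▸ hx.le_length), hw]
  exact hx.2 w hw

lemma of_isRotated (hx : IsDeBruijn m x) (hxy : x ~r y) : IsDeBruijn m y := by
  have hlen : y.length = x.length := hxy.perm.length_eq.symm
  refine ⟨hlen.trans hx.1, fun w hw => ?_⟩
  have hw₀ : w ≠ [] := List.ne_nil_of_length_pos (hw ▸ hx.ne_zero.pos)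
  rw [← hw, occ_append_take hw₀ (by rw [hw, hlen]; exact hx.le_length),
    ← hxy.cyclicPermutations.perm.countP_eq]
  exact hx.countP_isPrefixOf hw

lemma exists_isRotated_prefix (hx : IsDeBruijn m x) (hw : w.length = m) :
    ∃ y, x ~r y ∧ w <+: y := by
  have hpos : 0 < x.cyclicPermutations.countP w.isPrefixOf := by
    rw [hx.countP_isPrefixOf hw]
    exact one_pos
  obtain ⟨y, hy, hwy⟩ := List.countP_pos_iff.1 hpos
  exact ⟨y, (List.mem_cyclicPermutations_iff.1 hy).symm, List.isPrefixOf_iff_prefix.1 hwy⟩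

lemma not_replicate_infix (hx : IsDeBruijn m x) {n : ℕ} (hmn : m < n) (b : Bool) :
    ¬ List.replicate n b <:+: x := by
  intro h
  have hsucc : List.replicate (m + 1) b <:+: x :=
    (List.infix_replicate_iff.2 (by simpa using hmn)).trans h
  obtain ⟨p, q, rfl⟩ := hsucc
  set x := p ++ List.replicate (m + 1) b ++ q
  have hocc := hx.2 (List.replicate m b) List.length_replicate
  have hfirst : p ++ List.replicate m b ++ (b :: q ++ x.take (m - 1)) = x ++ x.take (m - 1) := by
    simp [x, List.replicate_succ']
  have hsecond : (p ++ [b]) ++ List.replicate m b ++ (q ++ x.take (m - 1)) =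
      x ++ x.take (m - 1) := by
    simp [x, List.replicate_succ]
  simpa using length_eq_of_occ_eq_one hocc hfirst hsecond

end IsDeBruijn

lemma replicate_false_prefix_of_isLeast {m : ℕ} {x : List Bool}
    (hx : IsLeast {y | IsDeBruijn m y} x) : List.replicate m false <+: x := by
  obtain ⟨y, hxy, hy⟩ := hx.1.exists_isRotated_prefix (List.length_replicate (a := false))
  exact replicate_prefix_of_le Bool.false_le hx.1.le_length (hx.2 (hx.1.of_isRotated hxy)) hy

lemma db_eq_nil_or_isLeast (m : ℕ) : db m = [] ∨ IsLeast {x | IsDeBruijn m x} (db m) := by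
  unfold db
  split_ifs with h
  · exact .inr ⟨h.choose_spec.1, fun y hy => h.choose_spec.2 y hy⟩
  · exact .inl rfl

section Blocks

variable {m n : ℕ}

lemma isRunFreeBlock_rotate_db {i : ℕ} (him : i < m) (hmn : m < n) :
    IsRunFreeBlock true n ((db m).rotate i) := by
  rcases db_eq_nil_or_isLeast m with hnil | hleast
  · rw [hnil, List.rotate_nil]
    exact .nil (by lia)
  · have getElem?_eq {j : ℕ} (hj : j < m) : (db m)[j]? = some false := by
      obtain ⟨r, hr⟩ := replicate_false_prefix_of_isLeast hleast
      rw [← hr, List.getElem?_append_left (by simpa using hj), List.getElem?_replicate_of_lt hj]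
    have hdb : IsRunFreeBlock true n (db m) :=
      ⟨by simp [List.head?_eq_getElem?, getElem?_eq (by lia : 0 < m)],
        hleast.1.not_replicate_infix hmn true⟩
    exact hdb.rotate (him.trans_le hleast.1.le_length) (by simp [getElem?_eq him])

lemma isRunFreeBlock_Bblk {i : ℕ} (him : i < m) (hmn : m < n) (t : ℕ) :
    IsRunFreeBlock true n (Bblk m t i) :=
  .flatten (by lia) fun _ hw => List.eq_of_mem_replicate hw ▸ isRunFreeBlock_rotate_db him hmn

lemma isRunFreeBlock_Sblk (hm : m ≠ 0) (hmn : m < n) : IsRunFreeBlock true n (Sblk m) := by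
  refine .flatten (by lia) (List.forall_mem_map.2 fun i hi => ?_)
  have him : i < m := (List.mem_range.1 hi).trans_le (Nat.ordProj_le 2 hm)
  exact isRunFreeBlock_Bblk him hmn (oddPart m)

end Blocks

/-- For every `n ≥ 2`, the string `1^n` does not occur as a substring of
`S_1 S_2 ⋯ S_{n-1}`. -/
theorem stmt11 (n : ℕ) (hn : 2 ≤ n) :
    ¬ (List.replicate n true <:+: Sfin (n - 1)) := by
  have hblock : ∀ k ∈ List.range (n - 1), IsRunFreeBlock true n (Sblk (k + 1)) := by
    intro k hk
    have hkn : k < n - 1 := List.mem_range.1 hk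
    exact isRunFreeBlock_Sblk k.succ_ne_zero (by lia)
  exact (IsRunFreeBlock.flatten (by lia) (List.forall_mem_map.2 hblock)).not_infix
end

section
/- For all sufficiently large n, every binary string w with |w| ≥ n−1 occurs at most n² times as a substring of the finite string S_1 S_2 ··· S_n, i.e., occ(w, S_1S_2···S_n) ≤ n². -/
/-!
Write `x = db m` and `m = 2 ^ s * t` with `t` odd, and let `x ^ t = 0 D`. Minimality makes `x` begin
with `m` zeros, so rotating `x ^ t` by `i < 2 ^ s` only moves `i` of them to the end, and the product
`S_m` of these rotations telescopes to `0 D ⋯ D 0 ⋯ 0`, with `2 ^ s` copies of `D` and `2 ^ s - 1`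
final zeros. What follows a copy of `D` starts with `m - 1` zeros, exactly as `x` does, so a window
of length `m` starting in that copy is a window of the periodic word `x x x ⋯`; a given word of
length `m` therefore starts at most `t` times in each copy, and fewer than `m + 2 ^ s` times in
`S_m`.

The largest powers of two dividing `1, …, n` sum to `O(n log n)`, so a word of length at least
`n - 1` starts at most `n ^ 2 / 2 + O(n log n)` times in `S_1 ⋯ S_{n-1}`. In `S_n` a word of length
`n - 1` is extended by one bit, which only doubles the bound there.
-/

section ListLemmas

variable {α : Type*}

theorem replicate_prefix_replicate {m n : ℕ} (h : m ≤ n) (a : α) :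
    List.replicate m a <+: List.replicate n a :=
  List.prefix_replicate_iff.2 ⟨by simpa using h, by simp⟩

theorem replicate_prefix_replicate_append {n : ℕ} {a : α} {T : List α}
    (hT : List.replicate n a <+: T) (k : ℕ) :
    List.replicate n a <+: List.replicate k a ++ T :=
  calc List.replicate n a <+: List.replicate (k + n) a :=
        replicate_prefix_replicate (Nat.le_add_left n k) a
    _ = List.replicate k a ++ List.replicate n a := List.replicate_add ..
    _ <+: List.replicate k a ++ T := (List.prefix_append_right_inj _).2 hT

theorem prefix_flatten_replicate_append {z D T : List α} (hD : z <+: D) (hT : z <+: T) :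
    ∀ k, z <+: (List.replicate k D).flatten ++ T
  | 0 => by simpa using hT
  | k + 1 => by simpa [List.replicate_succ] using List.prefix_append_of_prefix hD

theorem replicate_bot_prefix_of_le [LinearOrder α] [OrderBot α] {m : ℕ} {x y : List α}
    (hm : m ≤ x.length) (hxy : x ≤ y) (hy : List.replicate m ⊥ <+: y) :
    List.replicate m ⊥ <+: x := by
  induction m generalizing x y with
  | zero => exact List.nil_prefix
  | succ m ih =>
    obtain _ | ⟨a, x⟩ := x
    · simp at hm
    obtain _ | ⟨b, y⟩ := y
    · simp [List.replicate_succ] at hy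
    obtain ⟨rfl, hy'⟩ := List.cons_prefix_cons.1 (List.replicate_succ ▸ hy)
    have ha : a = ⊥ := by
      by_contra ha
      exact hxy.not_gt (List.Lex.rel (bot_lt_iff_ne_bot.2 ha))
    subst ha
    have hxy' : x ≤ y := not_lt.1 fun h => hxy.not_gt (List.Lex.cons h)
    exact List.cons_prefix_cons.2 ⟨rfl, ih (by simpa using hm) hxy' hy'⟩

theorem prefix_iff_prefix_of_prefix {u l₁ l₂ : List α} (h : l₁ <+: l₂)
    (hu : u.length ≤ l₁.length) : u <+: l₁ ↔ u <+: l₂ :=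
  ⟨fun h' => h'.trans h, fun h' => List.prefix_of_prefix_length_le h' h hu⟩

theorem prefix_drop_append_iff_prefix_rotate {u x R : List α} {p : ℕ} (hp : p < x.length)
    (hu : u.length ≤ x.length) (hR : x.take (u.length - 1) <+: R) :
    u <+: (x ++ R).drop p ↔ u <+: x.rotate p := by
  rw [List.drop_append_of_le_length hp.le, List.rotate_eq_drop_append_take hp.le]
  calc u <+: x.drop p ++ R ↔ u <+: x.drop p ++ x.take (u.length - 1) :=
        (prefix_iff_prefix_of_prefix ((List.prefix_append_right_inj _).2 hR)
          (by simp; omega)).symm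
    _ ↔ u <+: x.drop p ++ x :=
        prefix_iff_prefix_of_prefix ((List.prefix_append_right_inj _).2 (List.take_prefix _ _))
          (by simp; omega)
    _ ↔ u <+: x.drop p ++ x.take p :=
        (prefix_iff_prefix_of_prefix
          ((List.prefix_append_right_inj _).2 (List.take_prefix _ _)) (by simp; omega)).symm

theorem flatten_replicate_append_comm (u v : List α) (t : ℕ) :
    (List.replicate t (u ++ v)).flatten ++ u = u ++ (List.replicate t (v ++ u)).flatten := by
  induction t with
  | zero => simp
  | succ t ih => simp [List.replicate_succ, ih]

theorem flatten_replicate_rotate (x : List α) (t : ℕ) {i : ℕ} (hi : i ≤ x.length) :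
    (List.replicate t (x.rotate i)).flatten = (List.replicate t x).flatten.rotate i := by
  obtain ⟨u, v, rfl, rfl⟩ : ∃ u v, x = u ++ v ∧ u.length = i :=
    ⟨x.take i, x.drop i, by simp, by simpa using hi⟩
  rw [List.rotate_append_length_eq]
  cases t with
  | zero => simp
  | succ t =>
    calc (List.replicate (t + 1) (v ++ u)).flatten
        = v ++ (u ++ (List.replicate t (v ++ u)).flatten) := by simp [List.replicate_succ]
      _ = v ++ (List.replicate t (u ++ v)).flatten ++ u := by
          rw [← flatten_replicate_append_comm, List.append_assoc]
      _ = (u ++ (v ++ (List.replicate t (u ++ v)).flatten)).rotate u.length :=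
          (List.rotate_append_length_eq _ _).symm
      _ = (List.replicate (t + 1) (u ++ v)).flatten.rotate u.length := by
          simp [List.replicate_succ]

-- The `i` letters `a` that the rotation by `i` moves to its end join the initial run of the next
-- rotation, which lost `i + 1` of them: the two together are exactly one `a` short of a full run.
theorem flatten_map_rotate_range {a : α} {D : List α} {k : ℕ}
    (h : List.replicate k a <+: a :: D) :
    ((List.range (k + 1)).map (a :: D).rotate).flatten =
      a :: D ++ (List.replicate k D).flatten ++ List.replicate k a := by
  induction k with
  | zero => simp
  | succ k ih =>
    obtain ⟨E, hE⟩ := h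
    have hD : D = List.replicate k a ++ E := by
      simpa [List.replicate_succ] using hE.symm
    have hrot : (a :: D).rotate (k + 1) = E ++ List.replicate (k + 1) a := by
      rw [← hE]
      simpa using List.rotate_append_length_eq (List.replicate (k + 1) a) E
    have hk : List.replicate k a <+: a :: D :=
      (replicate_prefix_replicate k.le_succ a).trans ⟨E, hE⟩
    calc ((List.range (k + 1 + 1)).map (a :: D).rotate).flatten
        = a :: D ++ (List.replicate k D).flatten ++
            (List.replicate k a ++ E) ++ List.replicate (k + 1) a := by
          simp [List.range_succ (n := k + 1), ih hk, hrot]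
      _ = a :: D ++ (List.replicate (k + 1) D).flatten ++ List.replicate (k + 1) a := by
          rw [← hD]; simp [List.replicate_succ']

end ListLemmas

section Counting

variable {α : Type*} [DecidableEq α]

/-- The number of occurrences of `u` in `A ++ T` that start inside `A`. Letting an occurrence run
over into the text `T` that follows makes the count additive under concatenation. -/
def startCount (u A T : List α) : ℕ := Nat.count (fun p => u <+: (A ++ T).drop p) A.length

/-- The number of occurrences of `u` in `x` read cyclically (for `u` no longer than `x`), by
starting position. -/
def cyclicCount (u x : List α) : ℕ := Nat.count (fun p => u <+: x.rotate p) x.length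

@[simp]
theorem startCount_nil (u T : List α) : startCount u [] T = 0 := by
  simp [startCount]

theorem startCount_append (u A B T : List α) :
    startCount u (A ++ B) T = startCount u A (B ++ T) + startCount u B T := by
  simp [startCount, Nat.count_add, ← List.drop_drop]

theorem startCount_cons (u : List α) (a : α) (A T : List α) :
    startCount u (a :: A) T = startCount u A T + if u <+: a :: (A ++ T) then 1 else 0 := by
  simp [startCount, Nat.count_succ']

theorem startCount_le_length (u A T : List α) : startCount u A T ≤ A.length :=
  Nat.count_le _

theorem startCount_le_of_prefix {u u' : List α} (h : u' <+: u) (A T : List α) :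
    startCount u A T ≤ startCount u' A T :=
  Nat.count_mono_left fun _ _ hp => h.trans hp

theorem startCount_le_sum_concat [Fintype α] {u T : List α} (A : List α)
    (hT : u.length ≤ T.length) : startCount u A T ≤ ∑ b, startCount (u ++ [b]) A T := by
  induction A with
  | nil => simp
  | cons a A ih =>
    simp only [startCount_cons, Finset.sum_add_distrib]
    refine Nat.add_le_add ih ?_
    split_ifs with hu
    · obtain ⟨r, hr⟩ := hu
      obtain _ | ⟨b, r⟩ := r
      · have := congrArg List.length hr
        simp at this
        omega
      have hb : u ++ [b] <+: a :: (A ++ T) := ⟨r, by simpa using hr⟩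
      calc 1 = if u ++ [b] <+: a :: (A ++ T) then 1 else 0 := (if_pos hb).symm
        _ ≤ ∑ c, if u ++ [c] <+: a :: (A ++ T) then 1 else 0 :=
            Finset.single_le_sum
              (f := fun c => if u ++ [c] <+: a :: (A ++ T) then 1 else 0)
              (fun _ _ => Nat.zero_le _) (Finset.mem_univ b)
    · exact Nat.zero_le _

theorem startCount_flatten_replicate_le {u z D T : List α} {c : ℕ}
    (h : ∀ R, z <+: R → startCount u D R ≤ c) (hD : z <+: D) (hT : z <+: T) (k : ℕ) :
    startCount u (List.replicate k D).flatten T ≤ k * c := by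
  induction k with
  | zero => simp
  | succ k ih =>
    rw [List.replicate_succ, List.flatten_cons, startCount_append, Nat.succ_mul, Nat.add_comm]
    exact Nat.add_le_add ih (h _ (prefix_flatten_replicate_append hD hT k))

theorem startCount_cons_append_le {u D T : List α} {a : α} {n c : ℕ}
    (h : ∀ R, List.replicate n a <+: R → startCount u (a :: D) R ≤ c)
    (hD : List.replicate n a <+: D) (hT : List.replicate n a <+: T) (k : ℕ) :
    startCount u (a :: D ++ (List.replicate k D).flatten ++ List.replicate k a) T ≤
      (k + 1) * c + k := by
  have hT' := replicate_prefix_replicate_append hT k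
  have hcons (R : List α) : startCount u D R ≤ startCount u (a :: D) R := by
    rw [startCount_cons]
    exact Nat.le_add_right _ _
  have hcopies : startCount u (List.replicate k D).flatten (List.replicate k a ++ T) ≤ k * c :=
    startCount_flatten_replicate_le (fun R hR => (hcons R).trans (h R hR)) hD hT' k
  have hhead := h _ (prefix_flatten_replicate_append hD hT' k)
  have htail : startCount u (List.replicate k a) T ≤ k := by
    simpa using startCount_le_length u (List.replicate k a) T
  rw [startCount_append, startCount_append]
  linarith

theorem startCount_eq_cyclicCount {u x R : List α} (hu : u.length ≤ x.length)
    (hR : x.take (u.length - 1) <+: R) : startCount u x R = cyclicCount u x := by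
  refine le_antisymm (Nat.count_mono_left fun p hp => ?_) (Nat.count_mono_left fun p hp => ?_)
  · exact (prefix_drop_append_iff_prefix_rotate hp hu hR).1
  · exact (prefix_drop_append_iff_prefix_rotate hp hu hR).2

theorem cyclicCount_rotate (u x : List α) (r : ℕ) :
    cyclicCount u (x.rotate r) = cyclicCount u x := by
  have hperiodic : ∀ p, x.rotate (x.length + p) = x.rotate p := fun p => by
    rw [← List.rotate_rotate, List.rotate_length]
  have h₁ := Nat.count_add (fun p => u <+: x.rotate p) r x.length
  have h₂ := Nat.count_add (fun p => u <+: x.rotate p) x.length r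
  simp only [hperiodic] at h₂
  simp only [cyclicCount, List.rotate_rotate, List.length_rotate]
  rw [Nat.add_comm, h₂] at h₁
  omega

theorem exists_prefix_rotate_of_cyclicCount_ne_zero {u x : List α} (h : cyclicCount u x ≠ 0) :
    ∃ r, u <+: x.rotate r :=
  let ⟨r, _, hr⟩ := Nat.count_ne_iff_exists.1 h
  ⟨r, hr⟩

theorem startCount_flatten_replicate_le_mul_cyclicCount {u x T : List α}
    (hu : u.length ≤ x.length) (hT : x.take (u.length - 1) <+: T) (t : ℕ) :
    startCount u (List.replicate t x).flatten T ≤ t * cyclicCount u x :=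
  startCount_flatten_replicate_le (fun _ hR => (startCount_eq_cyclicCount hu hR).le)
    (List.take_prefix _ _) hT t

end Counting

theorem occ_eq_count (w x : List Bool) :
    occ w x = Nat.count (fun i => w <+: x.drop i) (x.length + 1 - w.length) := by
  simp only [occ, Nat.count, List.countP_eq_length_filter, List.prefix_iff_eq_take, eq_comm]

theorem occ_append_eq_startCount {w T : List Bool} (hT : T.length + 1 = w.length)
    (A : List Bool) : occ w (A ++ T) = startCount w A T := by
  rw [occ_eq_count, startCount, List.length_append, Nat.add_assoc, hT, Nat.add_sub_cancel]

theorem occ_le_startCount {w : List Bool} (hw : w ≠ []) (x T : List Bool) :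
    occ w x ≤ startCount w x T := by
  have hlen : x.length + 1 - w.length ≤ x.length := by
    have := List.length_pos_iff.2 hw
    omega
  rw [occ_eq_count]
  refine (Nat.count_monotone _ hlen).trans (Nat.count_mono_left fun p hp h => ?_)
  rw [List.drop_append_of_le_length hp.le]
  exact List.prefix_append_of_prefix h

theorem isDeBruijn_iff_cyclicCount {m : ℕ} (hm : m ≠ 0) {x : List Bool} :
    IsDeBruijn m x ↔ x.length = 2 ^ m ∧ ∀ w : List Bool, w.length = m → cyclicCount w x = 1 := by
  refine and_congr_right fun hx => forall₂_congr fun w hw => ?_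
  have hmx : m < x.length := hx ▸ Nat.lt_two_pow_self
  rw [occ_append_eq_startCount (by simp; omega),
    startCount_eq_cyclicCount (by omega) (by rw [hw])]

theorem IsDeBruijn.rotate {m : ℕ} (hm : m ≠ 0) {x : List Bool} (hx : IsDeBruijn m x) (r : ℕ) :
    IsDeBruijn m (x.rotate r) := by
  rw [isDeBruijn_iff_cyclicCount hm] at hx ⊢
  simpa only [List.length_rotate, cyclicCount_rotate] using hx

theorem replicate_false_prefix_of_minimal {m : ℕ} (hm : m ≠ 0) {x : List Bool}
    (hx : IsDeBruijn m x) (hmin : ∀ y, IsDeBruijn m y → x ≤ y) :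
    List.replicate m false <+: x := by
  obtain ⟨hlen, hcount⟩ := (isDeBruijn_iff_cyclicCount hm).1 hx
  obtain ⟨r, hr⟩ : ∃ r, List.replicate m false <+: x.rotate r :=
    exists_prefix_rotate_of_cyclicCount_ne_zero (by rw [hcount _ (by simp)]; exact one_ne_zero)
  exact replicate_bot_prefix_of_le (hlen ▸ Nat.lt_two_pow_self.le) (hmin _ (hx.rotate hm r)) hr

theorem db_eq_nil_or {m : ℕ} (hm : m ≠ 0) :
    db m = [] ∨ IsDeBruijn m (db m) ∧ List.replicate m false <+: db m := by
  unfold db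
  split_ifs with h
  · obtain ⟨hx, hmin⟩ := h.choose_spec
    exact .inr ⟨hx, replicate_false_prefix_of_minimal hm hx hmin⟩
  · exact .inl rfl

theorem oddPart_pos {m : ℕ} (hm : m ≠ 0) : 0 < oddPart m :=
  Nat.ordCompl_pos 2 hm

theorem ordProj_mul_oddPart (m : ℕ) : ordProj[2] m * oddPart m = m :=
  Nat.ordProj_mul_ordCompl_eq_self m 2

theorem Sblk_eq_nil {m : ℕ} (h : db m = []) : Sblk m = [] := by
  simp [Sblk, Bblk, h]

theorem exists_Sblk_eq {m : ℕ} (hm : m ≠ 0) (hz : List.replicate m false <+: db m) :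
    ∃ D k, k + 1 = ordProj[2] m ∧
      false :: D = (List.replicate (oddPart m) (db m)).flatten ∧
      List.replicate m false <+: false :: D ∧
      Sblk m = false :: D ++ (List.replicate k D).flatten ++ List.replicate k false := by
  have hmdb : m ≤ (db m).length := by simpa using hz.length_le
  have hpow : db m <+: (List.replicate (oddPart m) (db m)).flatten := by
    obtain ⟨t, ht⟩ := Nat.exists_eq_succ_of_ne_zero (oddPart_pos hm).ne'
    simp [ht, List.replicate_succ]
  have hzpow := hz.trans hpow
  obtain ⟨D, hD⟩ := (replicate_prefix_replicate (Nat.one_le_iff_ne_zero.2 hm) false).trans hzpow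
  rw [List.replicate_one, List.singleton_append] at hD
  rw [← hD] at hzpow
  obtain ⟨k, hk⟩ := Nat.exists_eq_add_one_of_ne_zero (Nat.ordProj_pos m 2).ne'
  have hkm : k + 1 ≤ m := hk ▸ Nat.ordProj_le 2 hm
  have hzk : List.replicate k false <+: false :: D :=
    (replicate_prefix_replicate (by omega) false).trans hzpow
  refine ⟨D, k, hk.symm, hD, hzpow, ?_⟩
  rw [← flatten_map_rotate_range hzk, Sblk, hk]
  congr 1
  refine List.map_congr_left fun i hi => ?_
  have hi : i < k + 1 := List.mem_range.1 hi
  rw [Bblk, flatten_replicate_rotate _ _ (by omega), ← hD]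

theorem replicate_false_prefix_Sblk_append {m : ℕ} (hm : m ≠ 0) {T : List Bool}
    (hT : List.replicate m false <+: T) : List.replicate m false <+: Sblk m ++ T := by
  obtain hnil | ⟨-, hz⟩ := db_eq_nil_or hm
  · simpa [Sblk_eq_nil hnil] using hT
  obtain ⟨D, k, -, -, hzD, hS⟩ := exists_Sblk_eq hm hz
  rw [hS, List.append_assoc, List.append_assoc]
  exact List.prefix_append_of_prefix hzD

theorem startCount_Sblk_le_of_length_eq {m : ℕ} (hm : m ≠ 0) {w T : List Bool}
    (hw : w.length = m) (hT : List.replicate m false <+: T) :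
    startCount w (Sblk m) T ≤ m + ordProj[2] m := by
  obtain hnil | ⟨hdb, hz⟩ := db_eq_nil_or hm
  · simp [Sblk_eq_nil hnil]
  obtain ⟨D, k, hk, hD, hzD, hS⟩ := exists_Sblk_eq hm hz
  obtain ⟨hlen, hcount⟩ := (isDeBruijn_iff_cyclicCount hm).1 hdb
  have hwdb : w.length ≤ (db m).length := by
    rw [hw, hlen]
    exact Nat.lt_two_pow_self.le
  obtain ⟨n, rfl⟩ := Nat.exists_eq_add_one_of_ne_zero hm
  have hzn : List.replicate n false <+: List.replicate (n + 1) false :=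
    replicate_prefix_replicate n.le_succ false
  have htake : (db (n + 1)).take (w.length - 1) = List.replicate n false := by
    rw [hw, Nat.add_sub_cancel]
    simpa using (List.prefix_iff_eq_take.1 (hzn.trans hz)).symm
  have hpow (R : List Bool) (hR : List.replicate n false <+: R) :
      startCount w (false :: D) R ≤ oddPart (n + 1) := by
    rw [hD]
    simpa [hcount w hw] using
      startCount_flatten_replicate_le_mul_cyclicCount hwdb (htake ▸ hR) (oddPart (n + 1))
  have hzD' : List.replicate n false <+: D :=
    (List.cons_prefix_cons.1 (List.replicate_succ ▸ hzD)).2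
  calc startCount w (Sblk (n + 1)) T ≤ (k + 1) * oddPart (n + 1) + k := by
        rw [hS]
        exact startCount_cons_append_le hpow hzD' (hzn.trans hT) k
    _ ≤ n + 1 + ordProj[2] (n + 1) := by
        rw [hk, ordProj_mul_oddPart, ← hk]
        exact Nat.add_le_add_left k.le_succ (n + 1)

theorem startCount_Sblk_le {m : ℕ} (hm : m ≠ 0) {w T : List Bool} (hw : m ≤ w.length)
    (hT : List.replicate m false <+: T) :
    startCount w (Sblk m) T ≤ m + ordProj[2] m :=
  (startCount_le_of_prefix (List.take_prefix m w) _ _).trans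
    (startCount_Sblk_le_of_length_eq hm (by simpa using hw) hT)

theorem startCount_Sblk_succ_le {m : ℕ} {w T : List Bool} (hw : m ≤ w.length)
    (hT : List.replicate (m + 1) false <+: T) :
    startCount w (Sblk (m + 1)) T ≤ 2 * (m + 1 + ordProj[2] (m + 1)) := by
  have htake : (w.take m).length = m := by simpa using hw
  have hlen : m + 1 ≤ T.length := by simpa using hT.length_le
  have hext (b : Bool) :
      startCount (w.take m ++ [b]) (Sblk (m + 1)) T ≤ m + 1 + ordProj[2] (m + 1) :=
    startCount_Sblk_le m.succ_ne_zero (by simp [htake]) hT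
  calc startCount w (Sblk (m + 1)) T ≤ startCount (w.take m) (Sblk (m + 1)) T :=
        startCount_le_of_prefix (List.take_prefix m w) _ _
    _ ≤ ∑ b, startCount (w.take m ++ [b]) (Sblk (m + 1)) T :=
        startCount_le_sum_concat _ (by omega)
    _ ≤ ∑ _b : Bool, (m + 1 + ordProj[2] (m + 1)) := Finset.sum_le_sum fun b _ => hext b
    _ = 2 * (m + 1 + ordProj[2] (m + 1)) := by simp

theorem Sfin_succ (m : ℕ) : Sfin (m + 1) = Sfin m ++ Sblk (m + 1) := by
  simp [Sfin, List.range_succ]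

theorem startCount_Sfin_le {m : ℕ} {w T : List Bool} (hw : m ≤ w.length)
    (hT : List.replicate m false <+: T) :
    startCount w (Sfin m) T ≤ ∑ k ∈ Finset.range m, (k + 1 + ordProj[2] (k + 1)) := by
  induction m generalizing T with
  | zero => simp [Sfin]
  | succ m ih =>
    have hT' : List.replicate m false <+: Sblk (m + 1) ++ T :=
      (replicate_prefix_replicate m.le_succ false).trans
        (replicate_false_prefix_Sblk_append m.succ_ne_zero hT)
    rw [Sfin_succ, startCount_append, Finset.sum_range_succ]
    exact Nat.add_le_add (ih (by omega) hT') (startCount_Sblk_le m.succ_ne_zero hw hT)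

theorem sum_ordProj_le {p : ℕ} (hp : 1 < p) (n : ℕ) :
    ∑ k ∈ Finset.range n, ordProj[p] (k + 1) ≤ n * (Nat.log p n + 1) := by
  have hterm : ∀ k ∈ Finset.range n, ordProj[p] (k + 1) ≤
      ∑ j ∈ Finset.range (Nat.log p n + 1), if p ^ j ∣ k + 1 then p ^ j else 0 := by
    intro k hk
    have hle : ordProj[p] (k + 1) ≤ n :=
      (Nat.ordProj_le p k.succ_ne_zero).trans (Finset.mem_range.1 hk)
    have hmem : (k + 1).factorization p ∈ Finset.range (Nat.log p n + 1) :=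
      Finset.mem_range_succ_iff.2 (Nat.le_log_of_pow_le hp hle)
    simpa [Nat.ordProj_dvd] using Finset.single_le_sum
      (f := fun j => if p ^ j ∣ k + 1 then p ^ j else 0) (fun _ _ => Nat.zero_le _) hmem
  have hmultiples (j : ℕ) :
      ∑ k ∈ Finset.range n, (if p ^ j ∣ k + 1 then p ^ j else 0) ≤ n := by
    rw [← Finset.sum_filter, Finset.sum_const, Nat.card_multiples, smul_eq_mul]
    exact Nat.div_mul_le_self n _
  calc ∑ k ∈ Finset.range n, ordProj[p] (k + 1)
      ≤ ∑ k ∈ Finset.range n, ∑ j ∈ Finset.range (Nat.log p n + 1),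
          if p ^ j ∣ k + 1 then p ^ j else 0 := Finset.sum_le_sum hterm
    _ = ∑ j ∈ Finset.range (Nat.log p n + 1), ∑ k ∈ Finset.range n,
          if p ^ j ∣ k + 1 then p ^ j else 0 := Finset.sum_comm
    _ ≤ ∑ _j ∈ Finset.range (Nat.log p n + 1), n := Finset.sum_le_sum fun j _ => hmultiples j
    _ = n * (Nat.log p n + 1) := by simp [Nat.mul_comm]

theorem two_mul_log_two_add_seven_le {n : ℕ} (hn : 16 ≤ n) : 2 * Nat.log 2 n + 7 ≤ n := by
  have hpow : ∀ l, 4 ≤ l → 2 * l + 7 ≤ 2 ^ l := by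
    intro l hl
    induction l, hl using Nat.le_induction with
    | base => norm_num
    | succ l _ ih => rw [pow_succ]; omega
  exact (hpow _ (Nat.le_log_of_pow_le one_lt_two hn)).trans (Nat.pow_log_le_self 2 (by omega))

theorem sum_add_ordProj_add_two_mul_le_sq {m : ℕ} (hm : 16 ≤ m + 1) :
    ∑ k ∈ Finset.range m, (k + 1 + ordProj[2] (k + 1)) + 2 * (m + 1 + ordProj[2] (m + 1)) ≤
      (m + 1) ^ 2 := by
  have hgauss : 2 * ∑ k ∈ Finset.range m, (k + 1) = (m + 1) * m := by
    have := Finset.sum_range_id_mul_two (m + 1)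
    rw [Finset.sum_range_succ'] at this
    simpa [Nat.mul_comm] using this
  have hordProj := sum_ordProj_le one_lt_two (m + 1)
  rw [Finset.sum_range_succ] at hordProj
  have hlast : ordProj[2] (m + 1) ≤ m + 1 := Nat.ordProj_le 2 m.succ_ne_zero
  have hlog := two_mul_log_two_add_seven_le hm
  rw [Finset.sum_add_distrib]
  nlinarith

/-- For all sufficiently large `n`, every `w` with `|w| ≥ n - 1` occurs at most `n²`
times as a substring of `S_1 S_2 ⋯ S_n`. -/
theorem stmt13 :
    ∃ N : ℕ, ∀ n, N ≤ n → ∀ w : List Bool, n - 1 ≤ w.length →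
      occ w (Sfin n) ≤ n ^ 2 := by
  refine ⟨16, fun n hn w hw => ?_⟩
  obtain ⟨m, rfl⟩ : ∃ m, n = m + 1 := ⟨n - 1, by omega⟩
  have hw : m ≤ w.length := hw
  have hw_ne : w ≠ [] := List.length_pos_iff.1 (by omega)
  set T := List.replicate (m + 1) false
  have hT : List.replicate m false <+: Sblk (m + 1) ++ T :=
    (replicate_prefix_replicate m.le_succ false).trans
      (replicate_false_prefix_Sblk_append m.succ_ne_zero List.prefix_rfl)
  calc occ w (Sfin (m + 1)) ≤ startCount w (Sfin (m + 1)) T := occ_le_startCount hw_ne _ _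
    _ = startCount w (Sfin m) (Sblk (m + 1) ++ T) + startCount w (Sblk (m + 1)) T := by
        rw [Sfin_succ, startCount_append]
    _ ≤ _ := Nat.add_le_add (startCount_Sfin_le hw hT)
        (startCount_Sblk_succ_le hw List.prefix_rfl)
    _ ≤ (m + 1) ^ 2 := sum_add_ordProj_add_two_mul_le_sq hn
end
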